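/- (Polynomial-order embedding bounds) Let ε = sup_{(P,q)∈D} max(|∂_P S(P,q)|, |∂_q S(P,q)|). For every integer m with 1 ≤ m < δ/(6ε) − d, setting C_m = 6(m+d)/δ, the following hold: ‖X_m‖_{D₁} ≤ 2ε; there is a Hamiltonian vector field X̂_m = J∇H_m on D₁ with ‖X̂_m‖_{D₁} ≤ 4ε; and ‖Φ_{X_m} − f‖_{D₀} ≤ 3 C_m^m ε^{m+1}, ‖Φ_{X̂_m} − f‖_{D₀} ≤ 5 C_m^m ε^{m+1}, ‖X̂_m − X_m‖_{D₁} ≤ 4 C_m^m ε^{m+1}. -/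

import Mathlib

/-- Complex phase space `ℂ^d × ℂ^d ≅ ℂ^{2d}` with the sup norm. -/
abbrev CPhase (d : ℕ) := (Fin d → ℂ) × (Fin d → ℂ)

/-- Partial gradient `∂_P S` of `S` in the first block of `d` variables. -/
noncomputable def pGrad (d : ℕ) (S : CPhase d → ℂ) (x : CPhase d) : Fin d → ℂ :=
  fun i => fderiv ℂ S x (Pi.single i 1, 0)

/-- Partial gradient `∂_q S` of `S` in the second block of `d` variables. -/
noncomputable def qGrad (d : ℕ) (S : CPhase d → ℂ) (x : CPhase d) : Fin d → ℂ :=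
  fun i => fderiv ℂ S x (0, Pi.single i 1)

/-- The Hamiltonian vector field `J ∇H = (−∂_q H, ∂_p H)` of a Hamiltonian `H`. -/
noncomputable def hamVF (d : ℕ) (H : CPhase d → ℂ) (x : CPhase d) : CPhase d :=
  (-(qGrad d H x), pGrad d H x)

/-- Newton finite differences of a map `f`: `Δ₀(x) = x`,
`Δ_k(x) = Δ_{k−1}(f(x)) − Δ_{k−1}(x)`. -/
def finDiff {α : Type*} [AddCommGroup α] (f : α → α) : ℕ → α → α
  | 0, x => x
  | k + 1, x => finDiff f k (f x) - finDiff f k x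

/-- The interpolating vector field of order `m`:
`X_m(x) = Σ_{k=1}^m ((−1)^{k−1}/k) Δ_k(x)`. -/
noncomputable def interpVF (d : ℕ) (f : CPhase d → CPhase d) (m : ℕ) (x : CPhase d) :
    CPhase d :=
  ∑ k ∈ Finset.Icc 1 m, ((-1 : ℂ) ^ (k - 1) / k) • finDiff f k x

/-!
Embed `f` in the family `F μ` generated by `P · q + μ S(P, q)`, so that `F 0 = id` and `F 1 = f`.
The vector field `X_m` is the velocity at time `0` of the polynomial curve of degree `m` through the
first `m + 1` points of an orbit. For small `μ` this curve satisfies `y(s + 1) = F μ (y(s))`, hence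
`y' = X_m(y)`, up to an error vanishing to order `m + 1` in `μ`. As long as the orbit stays in the
domain, that is, on a disc of radius comparable to `κ = δ / (6 (m + d) ε)`, the error is holomorphic
in `μ` and bounded by a multiple of `κ ε`, so by the Schwarz lemma it is at `μ = 1` at most a
multiple of `κ ε κ⁻ᵐ⁻¹ = C_mᵐ εᵐ⁺¹`. Grönwall's inequality turns the error in the differential
equation into the error of the time-one map.

For the Hamiltonian, let `(Pₙ, Qₙ)` be the orbit of `(p, q)`. The action `Aₙ` of its first `n`
steps satisfies `dAₙ = Pₙ dQₙ - p dq`. Let `H` be the derivative at `n = 0` of the polynomial of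
degree `m` interpolating `p · Qₙ - Aₙ`. Its differential interpolates
`dp · (Qₙ - q) - (Pₙ - p) · dq - (Pₙ - p) · d(Qₙ - q)`, up to terms constant in `n`. The first two
terms give exactly the contraction of `X_m` with the symplectic form. The last is a product of two
sequences vanishing at `n = 0`, whose interpolated derivative at `0` is again of order `μᵐ⁺¹`.
-/

open Asymptotics Filter Topology

section NewtonDifferentiation

/-- Derivative at `0` of the interpolation polynomial of `a 0, …, a m` at the nodes `0, …, m`,
written in Newton's form: the truncation of `log (1 + Δ) = ∑ₖ (-1)ᵏ Δᵏ⁺¹ / (k + 1)`. -/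
noncomputable def newtonDeriv (𝕜 : Type*) {E : Type*} [Field 𝕜] [AddCommGroup E] [Module 𝕜 E]
    (m : ℕ) (a : ℕ → E) : E :=
  ∑ k ∈ Finset.range m, ((-1 : 𝕜) ^ k / (k + 1)) • (fwdDiff 1)^[k + 1] a 0

/-- The coefficient of `a n` in `newtonDeriv 𝕜 m a`. -/
noncomputable def newtonWeight (𝕜 : Type*) [Field 𝕜] (m n : ℕ) : 𝕜 :=
  ∑ k ∈ Finset.range m,
    ((-1 : 𝕜) ^ k / (k + 1)) * ((-1 : 𝕜) ^ (k + 1 - n) * ((k + 1).choose n : 𝕜))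

/-- The polynomial `X (X - 1) ⋯ (X - k + 1) / k!`. -/
noncomputable def binomialPoly (𝕜 : Type*) [Field 𝕜] (k : ℕ) : Polynomial 𝕜 :=
  Polynomial.C (1 / (k.factorial : 𝕜)) * descPochhammer 𝕜 k

variable {𝕜 E G H : Type*} [Field 𝕜] [AddCommGroup E] [Module 𝕜 E] [AddCommGroup G] [Module 𝕜 G]
  [AddCommGroup H] [Module 𝕜 H]

theorem finDiff_eq_fwdDiff_iterate (f : E → E) (k : ℕ) (x : E) :
    finDiff f k x = (fwdDiff 1)^[k] (fun n => f^[n] x) 0 := by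
  induction k generalizing x with
  | zero => rfl
  | succ k ih =>
    have hshift := fwdDiff_iter_comp_add 1 (fun n => f^[n] x) 1 k 0
    rw [finDiff, ih, ih, Function.iterate_succ_apply', fwdDiff, zero_add]
    exact congrArg (· - _) (by simpa [Function.iterate_succ_apply] using hshift)

theorem fwdDiff_iterate_zero_eq_sum (a : ℕ → E) {k m : ℕ} (hkm : k ≤ m) :
    (fwdDiff 1)^[k] a 0 =
      ∑ n ∈ Finset.range (m + 1), ((-1 : 𝕜) ^ (k - n) * (k.choose n : 𝕜)) • a n := by
  rw [fwdDiff_iter_eq_sum_shift]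
  refine Finset.sum_subset_zero_on_sdiff (Finset.range_mono (by omega)) (fun n hn => ?_)
    fun n _ => ?_
  · have hn : k < n := by simp only [Finset.mem_sdiff, Finset.mem_range] at hn; omega
    simp [Nat.choose_eq_zero_of_lt hn]
  · rw [← Int.cast_smul_eq_zsmul 𝕜]
    simp

theorem eq_sum_choose_smul_fwdDiff (a : ℕ → E) {n m : ℕ} (hnm : n ≤ m) :
    a n = ∑ k ∈ Finset.range (m + 1), (n.choose k : 𝕜) • (fwdDiff 1)^[k] a 0 := by
  have hnewton := shift_eq_sum_fwdDiff_iter 1 a n 0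
  rw [zero_add, nsmul_one, Nat.cast_id] at hnewton
  rw [hnewton]
  refine Finset.sum_subset_zero_on_sdiff (Finset.range_mono (by omega)) (fun k hk => ?_)
    fun k _ => ?_
  · have hk : n < k := by simp only [Finset.mem_sdiff, Finset.mem_range] at hk; omega
    simp [Nat.choose_eq_zero_of_lt hk]
  · rw [Nat.cast_smul_eq_nsmul]

theorem newtonDeriv_eq_sum (m : ℕ) (a : ℕ → E) :
    newtonDeriv 𝕜 m a = ∑ n ∈ Finset.range (m + 1), newtonWeight 𝕜 m n • a n := by
  simp_rw [newtonDeriv, newtonWeight, Finset.sum_smul]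
  rw [Finset.sum_comm]
  refine Finset.sum_congr rfl fun k hk => ?_
  rw [fwdDiff_iterate_zero_eq_sum (𝕜 := 𝕜) a (Nat.succ_le_of_lt (Finset.mem_range.1 hk)),
    Finset.smul_sum]
  simp_rw [smul_smul]

theorem newtonDeriv_congr {m : ℕ} {a b : ℕ → E} (h : ∀ n ≤ m, a n = b n) :
    newtonDeriv 𝕜 m a = newtonDeriv 𝕜 m b := by
  simp_rw [newtonDeriv_eq_sum]
  exact Finset.sum_congr rfl fun n hn => by rw [h n (Finset.mem_range_succ_iff.1 hn)]

theorem newtonDeriv_sub (m : ℕ) (a b : ℕ → E) :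
    newtonDeriv 𝕜 m (fun n => a n - b n) = newtonDeriv 𝕜 m a - newtonDeriv 𝕜 m b := by
  simp only [newtonDeriv_eq_sum, smul_sub, Finset.sum_sub_distrib]

theorem newtonDeriv_const (m : ℕ) (c : E) : newtonDeriv 𝕜 m (fun _ => c) = 0 := by
  have hzero : ∀ k, (fwdDiff 1)^[k] (0 : ℕ → E) = 0 :=
    Function.iterate_fixed (funext fun _ => sub_self 0)
  have hconst : fwdDiff 1 (fun _ : ℕ => c) = 0 := fwdDiff_const 1 c
  simp [newtonDeriv, Function.iterate_succ_apply, hconst, hzero]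

theorem map_newtonDeriv (L : E →ₗ[𝕜] G) (m : ℕ) (a : ℕ → E) :
    newtonDeriv 𝕜 m (fun n => L (a n)) = L (newtonDeriv 𝕜 m a) := by
  simp only [newtonDeriv_eq_sum, map_sum, map_smul]

theorem newtonDeriv_bilin (B : E →ₗ[𝕜] G →ₗ[𝕜] H) (m : ℕ) (a : ℕ → E) (b : ℕ → G) :
    newtonDeriv 𝕜 m (fun n => B (a n) (b n)) =
      ∑ k ∈ Finset.range (m + 1), ∑ l ∈ Finset.range (m + 1),
        newtonDeriv 𝕜 m (fun n => (n.choose k : 𝕜) * (n.choose l : 𝕜)) •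
          B ((fwdDiff 1)^[k] a 0) ((fwdDiff 1)^[l] b 0) := by
  have hterm (n : ℕ) (hn : n ∈ Finset.range (m + 1)) : B (a n) (b n) =
      ∑ k ∈ Finset.range (m + 1), ∑ l ∈ Finset.range (m + 1),
        ((n.choose k : 𝕜) * (n.choose l : 𝕜)) • B ((fwdDiff 1)^[k] a 0) ((fwdDiff 1)^[l] b 0) := by
    have hn : n ≤ m := Finset.mem_range_succ_iff.1 hn
    conv_lhs => rw [eq_sum_choose_smul_fwdDiff (𝕜 := 𝕜) a hn,
      eq_sum_choose_smul_fwdDiff (𝕜 := 𝕜) b hn]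
    simp only [map_sum, map_smul, LinearMap.sum_apply, LinearMap.smul_apply, mul_smul,
      Finset.smul_sum]
    rw [Finset.sum_comm]
    exact Finset.sum_congr rfl fun k _ => Finset.sum_congr rfl fun l _ => smul_comm _ _ _
  simp_rw [newtonDeriv_eq_sum, Finset.sum_smul]
  rw [Finset.sum_congr rfl fun n hn => congrArg _ (hterm n hn)]
  simp_rw [Finset.smul_sum, smul_smul, smul_eq_mul]
  rw [Finset.sum_comm]
  refine Finset.sum_congr rfl fun k _ => ?_
  rw [Finset.sum_comm]

section BinomialPolynomials

theorem natDegree_binomialPoly_le (k : ℕ) : (binomialPoly 𝕜 k).natDegree ≤ k :=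
  (Polynomial.natDegree_C_mul_le _ _).trans (descPochhammer_natDegree 𝕜 k).le

theorem binomialPoly_zero : binomialPoly 𝕜 0 = 1 := by
  simp [binomialPoly]

theorem binomialPoly_succ (k : ℕ) :
    binomialPoly 𝕜 (k + 1) =
      Polynomial.C (1 / (k + 1) : 𝕜) *
        (binomialPoly 𝕜 k * (Polynomial.X - (k : Polynomial 𝕜))) := by
  rw [binomialPoly, binomialPoly, descPochhammer_succ_right, Nat.factorial_succ, mul_assoc,
    ← mul_assoc (Polynomial.C _) (Polynomial.C _), ← Polynomial.C_mul, Nat.cast_mul,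
    Nat.cast_add_one, one_div_mul_one_div]

theorem eval_binomialPoly_succ (k : ℕ) (s : 𝕜) :
    (binomialPoly 𝕜 (k + 1)).eval s = (binomialPoly 𝕜 k).eval s * (s - k) / (k + 1) := by
  simp only [binomialPoly_succ, Polynomial.eval_mul, Polynomial.eval_C, Polynomial.eval_sub,
    Polynomial.eval_X, Polynomial.eval_natCast]
  ring

theorem eval_derivative_binomialPoly_succ (k : ℕ) (s : 𝕜) :
    (binomialPoly 𝕜 (k + 1)).derivative.eval s =
      ((binomialPoly 𝕜 k).derivative.eval s * (s - k) + (binomialPoly 𝕜 k).eval s) / (k + 1) := by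
  rw [binomialPoly_succ, Polynomial.derivative_C_mul]
  simp only [Polynomial.derivative_mul, Polynomial.derivative_sub, Polynomial.derivative_X,
    Polynomial.derivative_natCast, sub_zero, mul_one, Polynomial.eval_mul, Polynomial.eval_C,
    Polynomial.eval_add, Polynomial.eval_sub, Polynomial.eval_X, Polynomial.eval_natCast]
  ring

variable [CharZero 𝕜]

theorem eval_natCast_binomialPoly (k n : ℕ) :
    (binomialPoly 𝕜 k).eval (n : 𝕜) = n.choose k := by
  have hk : (k.factorial : 𝕜) ≠ 0 := Nat.cast_ne_zero.2 k.factorial_ne_zero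
  rw [binomialPoly, Polynomial.eval_mul, Polynomial.eval_C, descPochhammer_eval_eq_descFactorial,
    Nat.descFactorial_eq_factorial_mul_choose, Nat.cast_mul]
  field_simp

theorem eval_zero_binomialPoly_succ (k : ℕ) : (binomialPoly 𝕜 (k + 1)).eval 0 = 0 := by
  simpa using eval_natCast_binomialPoly (𝕜 := 𝕜) (k + 1) 0

theorem eval_add_one_binomialPoly_succ (k : ℕ) (s : 𝕜) :
    (binomialPoly 𝕜 (k + 1)).eval (s + 1) =
      (binomialPoly 𝕜 (k + 1)).eval s + (binomialPoly 𝕜 k).eval s := by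
  induction k with
  | zero => simp [eval_binomialPoly_succ, binomialPoly_zero]
  | succ k ih =>
    have h₁ : (k : 𝕜) + 1 ≠ 0 := Nat.cast_add_one_ne_zero k
    have h₂ : (k : 𝕜) + 1 + 1 ≠ 0 := mod_cast Nat.cast_add_one_ne_zero (R := 𝕜) (k + 1)
    rw [eval_binomialPoly_succ (k + 1) (s + 1), eval_binomialPoly_succ (k + 1) s, ih,
      eval_binomialPoly_succ k s]
    push_cast
    field_simp
    ring

theorem eval_zero_derivative_binomialPoly_succ (k : ℕ) :
    (binomialPoly 𝕜 (k + 1)).derivative.eval 0 = (-1) ^ k / (k + 1) := by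
  induction k with
  | zero => simp [eval_derivative_binomialPoly_succ, binomialPoly_zero]
  | succ k ih =>
    have h₁ : (k : 𝕜) + 1 ≠ 0 := Nat.cast_add_one_ne_zero k
    rw [eval_derivative_binomialPoly_succ, ih, eval_zero_binomialPoly_succ]
    push_cast
    field_simp
    ring

theorem eq_sum_fwdDiff_mul_binomialPoly {m : ℕ} {Q : Polynomial 𝕜} (hQ : Q.natDegree ≤ m) :
    Q = ∑ k ∈ Finset.range (m + 1),
      Polynomial.C ((fwdDiff 1)^[k] (fun n : ℕ => Q.eval (n : 𝕜)) 0) * binomialPoly 𝕜 k := by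
  refine Polynomial.eq_of_degrees_lt_of_eval_index_eq (v := ((↑) : ℕ → 𝕜))
    (Finset.range (m + 1)) Nat.cast_injective.injOn ?_ ?_ fun n hn => ?_
  · rw [Finset.card_range, Polynomial.degree_lt_iff_coeff_zero]
    exact fun k hk => Polynomial.coeff_eq_zero_of_natDegree_lt (by omega)
  · rw [← Polynomial.mem_degreeLT, Finset.card_range]
    refine Submodule.sum_mem _ fun k hk => ?_
    rw [Polynomial.mem_degreeLT, Polynomial.degree_lt_iff_coeff_zero]
    refine fun j hj => Polynomial.coeff_eq_zero_of_natDegree_lt ?_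
    exact (Polynomial.natDegree_C_mul_le _ _).trans_lt
      ((natDegree_binomialPoly_le k).trans_lt ((Finset.mem_range.1 hk).trans_le hj))
  · rw [Polynomial.eval_finsetSum]
    simp only [Polynomial.eval_mul, Polynomial.eval_C, eval_natCast_binomialPoly]
    rw [eq_sum_choose_smul_fwdDiff (𝕜 := 𝕜) (fun n : ℕ => Q.eval (n : 𝕜))
      (Finset.mem_range_succ_iff.1 hn)]
    exact Finset.sum_congr rfl fun k _ => mul_comm _ _

theorem newtonDeriv_eval {m : ℕ} {Q : Polynomial 𝕜} (hQ : Q.natDegree ≤ m) :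
    newtonDeriv 𝕜 m (fun n => Q.eval (n : 𝕜)) = Q.derivative.eval 0 := by
  conv_rhs => rw [eq_sum_fwdDiff_mul_binomialPoly hQ]
  rw [Polynomial.derivative_sum, Polynomial.eval_finsetSum, Finset.sum_range_succ',
    binomialPoly_zero, mul_one, Polynomial.derivative_C, Polynomial.eval_zero, add_zero]
  refine Finset.sum_congr rfl fun k _ => ?_
  rw [Polynomial.derivative_C_mul, Polynomial.eval_mul, Polynomial.eval_C,
    eval_zero_derivative_binomialPoly_succ, smul_eq_mul, mul_comm]

theorem newtonDeriv_eval_add {m : ℕ} {Q : Polynomial 𝕜} (hQ : Q.natDegree ≤ m) (s : 𝕜) :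
    newtonDeriv 𝕜 m (fun n => Q.eval (s + n)) = Q.derivative.eval s := by
  have hdeg : (Q.comp (Polynomial.X + Polynomial.C s)).natDegree ≤ m := by
    refine Polynomial.natDegree_comp_le.trans ?_
    rwa [Polynomial.natDegree_X_add_C, mul_one]
  simpa [Polynomial.derivative_comp, add_comm] using newtonDeriv_eval hdeg

theorem newtonDeriv_choose_mul_choose {m k l : ℕ} (h : k + 1 + (l + 1) ≤ m) :
    newtonDeriv 𝕜 m (fun n => (n.choose (k + 1) : 𝕜) * (n.choose (l + 1) : 𝕜)) = 0 := by
  have hdeg : (binomialPoly 𝕜 (k + 1) * binomialPoly 𝕜 (l + 1)).natDegree ≤ m :=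
    Polynomial.natDegree_mul_le.trans
      ((add_le_add (natDegree_binomialPoly_le _) (natDegree_binomialPoly_le _)).trans h)
  simpa [eval_natCast_binomialPoly, eval_zero_binomialPoly_succ, Polynomial.derivative_mul]
    using newtonDeriv_eval hdeg

end BinomialPolynomials

end NewtonDifferentiation

section NormBounds

theorem norm_eval_binomialPoly_le_pow (k : ℕ) (s : ℂ) :
    ‖(binomialPoly ℂ k).eval s‖ ≤ (‖s‖ + k) ^ k := by
  induction k with
  | zero => simp [binomialPoly_zero]
  | succ k ih =>
    have hk : ‖(k : ℂ) + 1‖ = k + 1 := by exact_mod_cast Complex.norm_natCast (k + 1)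
    have hsub : ‖s - k‖ ≤ ‖s‖ + k := (norm_sub_le _ _).trans (by simp)
    rw [eval_binomialPoly_succ, norm_div, norm_mul, hk]
    calc ‖(binomialPoly ℂ k).eval s‖ * ‖s - k‖ / (k + 1)
        ≤ ‖(binomialPoly ℂ k).eval s‖ * ‖s - k‖ :=
          div_le_self (by positivity) (le_add_of_nonneg_left k.cast_nonneg)
      _ ≤ (‖s‖ + k) ^ k * (‖s‖ + k) := by gcongr
      _ = (‖s‖ + k) ^ (k + 1) := by ring
      _ ≤ (‖s‖ + (k + 1 : ℕ)) ^ (k + 1) := by gcongr; simp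

-- With `a = ∏ⱼ (1 - t / j)`, `j = 1, …, k`, the number `b` is `-t da/dt`.
theorem exists_eval_binomialPoly_eq {t : ℝ} (ht₀ : 0 ≤ t) (ht₁ : t ≤ 1) (k : ℕ) :
    ∃ a b : ℝ, 0 ≤ a ∧ 0 ≤ b ∧ a + b ≤ 1 ∧
      (binomialPoly ℂ (k + 1)).eval (t : ℂ) = ((-1) ^ k * t * a / (k + 1) : ℝ) ∧
      (binomialPoly ℂ (k + 1)).derivative.eval (t : ℂ) = ((-1) ^ k * (a - b) / (k + 1) : ℝ) := by
  induction k with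
  | zero =>
    exact ⟨1, 0, zero_le_one, le_rfl, by norm_num,
      by simp [eval_binomialPoly_succ, binomialPoly_zero],
      by simp [eval_derivative_binomialPoly_succ, binomialPoly_zero]⟩
  | succ k ih =>
    obtain ⟨a, b, ha, hb, hab, heval, hderiv⟩ := ih
    obtain ⟨s, rfl⟩ : ∃ s, t = s * (k + 1) := ⟨t / (k + 1), by field_simp⟩
    have hs₀ : 0 ≤ s := nonneg_of_mul_nonneg_left ht₀ (by positivity)
    have : s ≤ 1 := by nlinarith [(Nat.cast_nonneg k : (0 : ℝ) ≤ k)]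
    have h₁ : (k : ℂ) + 1 ≠ 0 := Nat.cast_add_one_ne_zero k
    have h₂ : (k : ℂ) + 1 + 1 ≠ 0 := mod_cast Nat.cast_add_one_ne_zero (R := ℂ) (k + 1)
    refine ⟨a * (1 - s), b * (1 - s) + a * s, by nlinarith, by nlinarith, by nlinarith, ?_, ?_⟩
    · rw [eval_binomialPoly_succ, heval]
      push_cast
      field_simp
      ring
    · rw [eval_derivative_binomialPoly_succ, heval, hderiv]
      push_cast
      field_simp
      ring

theorem norm_eval_binomialPoly_succ_le (k : ℕ) {t : ℝ} (ht₀ : 0 ≤ t) (ht₁ : t ≤ 1) :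
    ‖(binomialPoly ℂ (k + 1)).eval (t : ℂ)‖ ≤ 1 / (k + 1) := by
  obtain ⟨a, b, ha, hb, hab, heval, -⟩ := exists_eval_binomialPoly_eq ht₀ ht₁ k
  have hk : (0 : ℝ) < k + 1 := by positivity
  rw [heval, Complex.norm_real, Real.norm_eq_abs, abs_div, abs_of_pos hk, mul_assoc, abs_mul,
    abs_neg_one_pow, one_mul, abs_of_nonneg (mul_nonneg ht₀ ha)]
  gcongr
  exact mul_le_one₀ ht₁ ha (by linarith)

theorem norm_eval_derivative_binomialPoly_succ_le (k : ℕ) {t : ℝ} (ht₀ : 0 ≤ t) (ht₁ : t ≤ 1) :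
    ‖(binomialPoly ℂ (k + 1)).derivative.eval (t : ℂ)‖ ≤ 1 / (k + 1) := by
  obtain ⟨a, b, ha, hb, hab, -, hderiv⟩ := exists_eval_binomialPoly_eq ht₀ ht₁ k
  have hk : (0 : ℝ) < k + 1 := by positivity
  rw [hderiv, Complex.norm_real, Real.norm_eq_abs, abs_div, abs_of_pos hk, abs_mul,
    abs_neg_one_pow, one_mul]
  gcongr
  exact abs_le.2 ⟨by linarith, by linarith⟩

variable {E : Type*} [NormedAddCommGroup E]

theorem norm_fwdDiff_iterate_succ_le {a : ℕ → E} {K : ℝ} {m : ℕ}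
    (h : ∀ n < m, ‖a (n + 1) - a n‖ ≤ K) {k j : ℕ} (hkj : k + 1 + j ≤ m) :
    ‖(fwdDiff 1)^[k + 1] a j‖ ≤ 2 ^ k * K := by
  induction k generalizing j with
  | zero => simpa [fwdDiff] using h j (by omega)
  | succ k ih =>
    rw [Function.iterate_succ_apply', fwdDiff]
    calc _ ≤ 2 ^ k * K + 2 ^ k * K :=
          (norm_sub_le _ _).trans (add_le_add (ih (by omega)) (ih (by omega)))
      _ = 2 ^ (k + 1) * K := by ring

theorem norm_fwdDiff_iterate_le_of_norm_le_sq {a : ℕ → E} {K : ℝ} {m : ℕ}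
    (h : ∀ n ≤ m, ‖a n‖ ≤ n ^ 2 * K) {k j : ℕ} (hkj : k + j ≤ m) :
    ‖(fwdDiff 1)^[k] a j‖ ≤ 2 ^ k * (j ^ 2 + j * k + k * (k + 1) / 4) * K := by
  induction k generalizing j with
  | zero => simpa using h j (by omega)
  | succ k ih =>
    rw [Function.iterate_succ_apply', fwdDiff]
    refine ((norm_sub_le _ _).trans (add_le_add (ih (by omega)) (ih (by omega)))).trans_eq ?_
    push_cast
    ring

theorem norm_newtonDeriv_le_of_norm_le_sq [NormedSpace ℂ E] {a : ℕ → E} {K : ℝ} {m : ℕ}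
    (h : ∀ n ≤ m, ‖a n‖ ≤ n ^ 2 * K) :
    ‖newtonDeriv ℂ m a‖ ≤ m * 2 ^ m / 2 * K := by
  have hsum : ∑ k ∈ Finset.range m, (2 : ℝ) ^ (k + 1) * (k + 2) / 4 = m * 2 ^ m / 2 := by
    clear h
    induction m with
    | zero => simp
    | succ m ih =>
      rw [Finset.sum_range_succ, ih]
      push_cast
      ring
  rw [← hsum, Finset.sum_mul]
  refine norm_sum_le_of_le _ fun k hk => ?_
  have hdiff := norm_fwdDiff_iterate_le_of_norm_le_sq h (k := k + 1) (j := 0)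
    (Nat.succ_le_of_lt (Finset.mem_range.1 hk))
  have hnorm : ‖(-1 : ℂ) ^ k / (k + 1)‖ = 1 / (k + 1) := by
    rw [norm_div, norm_pow, norm_neg, norm_one, one_pow]
    exact_mod_cast congrArg (1 / ·) (Complex.norm_natCast (k + 1))
  rw [norm_smul, hnorm, one_div_mul_eq_div, div_le_iff₀ (by positivity)]
  refine hdiff.trans_eq ?_
  push_cast
  ring

end NormBounds

section CauchyEstimates

variable {E G : Type*} [NormedAddCommGroup E] [NormedSpace ℂ E] [NormedAddCommGroup G]
  [NormedSpace ℂ G] {f : E → G} {c : E} {R M : ℝ}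

theorem norm_fderiv_apply_le_of_norm_lt (hd : DifferentiableOn ℂ f (Metric.ball c R))
    (hM : ∀ y ∈ Metric.ball c R, ‖f y‖ ≤ M) {v : E} (hv : ‖v‖ < R) : ‖fderiv ℂ f c v‖ ≤ M := by
  have hmaps : Set.MapsTo (fun z : ℂ => c + z • v) (Metric.closedBall 0 1) (Metric.ball c R) := by
    intro z hz
    rw [mem_closedBall_zero_iff] at hz
    rw [mem_ball_iff_norm, add_sub_cancel_left, norm_smul]
    exact (mul_le_of_le_one_left (norm_nonneg v) hz).trans_lt hv
  have hdiff : DiffContOnCl ℂ (fun z : ℂ => f (c + z • v)) (Metric.ball 0 1) := by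
    refine DifferentiableOn.diffContOnCl ?_
    rw [closure_ball _ one_ne_zero]
    exact hd.comp (by fun_prop) hmaps
  have hderiv : HasDerivAt (fun z : ℂ => f (c + z • v)) (fderiv ℂ f c v) 0 := by
    have hline : HasDerivAt (fun z : ℂ => c + z • v) v 0 := by
      simpa using ((hasDerivAt_id (0 : ℂ)).smul_const v).const_add c
    refine HasFDerivAt.comp_hasDerivAt (l := f) (f := fun z : ℂ => c + z • v) 0 ?_ hline
    have hc : c ∈ Metric.ball c R := Metric.mem_ball_self ((norm_nonneg v).trans_lt hv)
    simpa using (hd.differentiableAt (Metric.isOpen_ball.mem_nhds hc)).hasFDerivAt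
  simpa [hderiv.deriv] using Complex.norm_deriv_le_of_forall_mem_sphere_norm_le one_pos hdiff
    fun z hz => hM _ (hmaps (Metric.sphere_subset_closedBall hz))

theorem norm_fderiv_le_of_forall_mem_ball (hR : 0 < R) (hd : DifferentiableOn ℂ f (Metric.ball c R))
    (hM : ∀ y ∈ Metric.ball c R, ‖f y‖ ≤ M) : ‖fderiv ℂ f c‖ ≤ M / R := by
  have hM₀ : 0 ≤ M := (norm_nonneg _).trans (hM c (Metric.mem_ball_self hR))
  refine ContinuousLinearMap.opNorm_le_bound _ (by positivity) fun v => ?_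
  have hscale : ∀ s ∈ Set.Ioi (‖v‖ / R), ‖fderiv ℂ f c v‖ ≤ M * s := by
    intro s hs
    have hs₀ : 0 < s := (div_nonneg (norm_nonneg v) hR.le).trans_lt hs
    have hlt : ‖(s : ℂ)⁻¹ • v‖ < R := by
      rw [norm_smul, norm_inv, Complex.norm_real, Real.norm_of_nonneg hs₀.le,
        inv_mul_lt_iff₀ hs₀]
      exact (div_lt_iff₀ hR).1 hs
    have h := norm_fderiv_apply_le_of_norm_lt hd hM hlt
    rwa [map_smul, norm_smul, norm_inv, Complex.norm_real, Real.norm_of_nonneg hs₀.le,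
      inv_mul_le_iff₀ hs₀, mul_comm] at h
  rw [div_mul_eq_mul_div, ← mul_div_assoc']
  have hcont : ContinuousWithinAt (fun s => M * s) (Set.Ioi (‖v‖ / R)) (‖v‖ / R) := by fun_prop
  exact ge_of_tendsto hcont.tendsto (eventually_mem_nhdsWithin.mono hscale)

theorem norm_sub_le_of_forall_mem_ball {a r : ℝ} (hr : 0 < r)
    (hd : DifferentiableOn ℂ f (Metric.ball c (a + r)))
    (hM : ∀ y ∈ Metric.ball c (a + r), ‖f y‖ ≤ M) {x y : E}
    (hx : x ∈ Metric.closedBall c a) (hy : y ∈ Metric.closedBall c a) :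
    ‖f y - f x‖ ≤ M / r * ‖y - x‖ := by
  let _ : NormedSpace ℝ E := NormedSpace.restrictScalars ℝ ℂ E
  have hsub : ∀ z ∈ Metric.closedBall c a, Metric.ball z r ⊆ Metric.ball c (a + r) := by
    intro z hz
    exact Metric.ball_subset_ball' (by linarith [Metric.mem_closedBall.1 hz])
  refine (convex_closedBall c a).norm_image_sub_le_of_norm_fderiv_le (𝕜 := ℂ)
    (fun z hz => ?_) (fun z hz => ?_) hx hy
  · exact hd.differentiableAt (Filter.mem_of_superset (Metric.ball_mem_nhds z hr) (hsub z hz))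
  · exact norm_fderiv_le_of_forall_mem_ball hr (hd.mono (hsub z hz)) fun y hy => hM y (hsub z hz hy)

theorem norm_le_mul_div_pow_of_isBigO {φ : ℂ → G} {k : ℕ}
    (hd : DifferentiableOn ℂ φ (Metric.ball 0 R)) (hM : ∀ z ∈ Metric.ball (0 : ℂ) R, ‖φ z‖ ≤ M)
    (hφ : φ =O[𝓝 0] fun z => z ^ (k + 1)) {z : ℂ} (hz : ‖z‖ < R) :
    ‖φ z‖ ≤ M * (‖z‖ / R) ^ (k + 1) := by
  have hφ₀ : φ 0 = 0 := by
    obtain ⟨C, hC⟩ := hφ.bound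
    simpa using hC.self_of_nhds
  have hlittle : (fun w => φ w - φ 0) =o[𝓝 0] fun w => ‖w - 0‖ ^ k := by
    simp only [hφ₀, sub_zero, ← norm_pow]
    exact (hφ.trans_isLittleO (isLittleO_pow_pow k.lt_succ_self)).norm_right
  simpa [hφ₀] using Complex.dist_le_mul_div_pow_of_mapsTo_ball_of_isLittleO hd
    (fun w hw => by simpa [hφ₀] using hM w hw) hlittle (by simpa using hz)

theorem add_one_mem_ball_zero {T : ℝ} {w : ℂ} (hw : w ∈ Metric.ball (0 : ℂ) (T - 1)) :
    w + 1 ∈ Metric.ball (0 : ℂ) T := by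
  rw [mem_ball_zero_iff] at hw ⊢
  linarith [norm_add_le w 1, norm_one (α := ℂ)]

theorem differentiableOn_dslope_add_one [CompleteSpace G] {h : ℂ → G} {T : ℝ} (hT : 0 < T)
    (hd : DifferentiableOn ℂ h (Metric.ball 0 T)) :
    DifferentiableOn ℂ (fun w => dslope h 0 (w + 1)) (Metric.ball 0 (T - 1)) :=
  ((Complex.differentiableOn_dslope (Metric.ball_mem_nhds 0 hT)).2 hd).comp (by fun_prop)
    fun _ => add_one_mem_ball_zero

theorem norm_dslope_add_one_le {h : ℂ → G} {T M : ℝ}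
    (hd : DifferentiableOn ℂ h (Metric.ball 0 T)) (hM : ∀ s ∈ Metric.ball (0 : ℂ) T, ‖h s‖ ≤ M)
    (h₀ : h 0 = 0) {w : ℂ} (hw : w ∈ Metric.ball (0 : ℂ) (T - 1)) :
    ‖dslope h 0 (w + 1)‖ ≤ M / T :=
  Complex.norm_dslope_le_div_of_mapsTo_ball hd (fun z hz => by simpa [h₀] using hM z hz)
    (add_one_mem_ball_zero hw)

theorem norm_le_of_zeros_at_natCast [CompleteSpace G] {n : ℕ} {h : ℂ → G} {T M : ℝ}
    (hd : DifferentiableOn ℂ h (Metric.ball 0 T)) (hM : ∀ s ∈ Metric.ball (0 : ℂ) T, ‖h s‖ ≤ M)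
    (hzero : ∀ j < n, h (j : ℂ) = 0) {s : ℂ} (hs : ‖s‖ + 2 * n < T) :
    ‖h s‖ ≤ M * ((‖s‖ + n) / (T - n)) ^ n := by
  induction n generalizing h T M s with
  | zero => simpa using hM s (by simpa using hs)
  | succ n ih =>
    push_cast at hs ⊢
    have hT : 0 < T := by linarith [norm_nonneg s]
    have h₀ : h 0 = 0 := by simpa using hzero 0 n.succ_pos
    have hfactor := ih (h := fun w => dslope h 0 (w + 1)) (T := T - 1) (M := M / T) (s := s - 1)
      (differentiableOn_dslope_add_one hT hd) (fun w hw => norm_dslope_add_one_le hd hM h₀ hw)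
      (fun j hj => ?_) ?_
    · have hM₀ : 0 ≤ M := (norm_nonneg _).trans (hM 0 (by simpa using hT))
      have hs1 : ‖s - 1‖ ≤ ‖s‖ + 1 := by simpa using norm_sub_le s 1
      have hTn : 0 < T - (n + 1) := by linarith [norm_nonneg s]
      have hh : h s = s • dslope h 0 s := by simpa [h₀] using (sub_smul_dslope h 0 s).symm
      rw [sub_add_cancel] at hfactor
      rw [hh, norm_smul]
      calc ‖s‖ * ‖dslope h 0 s‖
          ≤ (‖s‖ + (n + 1)) * (M / (T - (n + 1)) * ((‖s‖ + (n + 1)) / (T - (n + 1))) ^ n) := by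
            have hratio : (‖s - 1‖ + n) / (T - 1 - n) ≤ (‖s‖ + (n + 1)) / (T - (n + 1)) := by
              rw [sub_sub, add_comm 1]
              gcongr ?_ / _
              linarith
            have hTn' : 0 < T - 1 - n := by linarith
            gcongr
            · linarith
            · refine hfactor.trans ?_
              gcongr
              linarith
        _ = M * ((‖s‖ + (n + 1)) / (T - (n + 1))) ^ (n + 1) := by ring
    · have hne : (j : ℂ) + 1 ≠ 0 := j.cast_add_one_ne_zero
      have hj' : h ((j : ℂ) + 1) = 0 := mod_cast hzero (j + 1) (by omega)
      simp [dslope_of_ne _ hne, slope_def_module, h₀, hj']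
    · linarith [norm_sub_le s 1, norm_one (α := ℂ)]

end CauchyEstimates

section ImplicitMaps

attribute [local fun_prop] analyticAt_fst analyticAt_snd

section FixedPoints

variable {V : Type*} [NormedAddCommGroup V] [NormedSpace ℂ V]
  {b : V → V} {y P P' : V} {μ : ℂ} {ε R : ℝ}

theorem norm_sub_le_of_eq_sub_smul (hb : ‖b P‖ ≤ ε) (hP : P = y - μ • b P) :
    ‖P - y‖ ≤ ‖μ‖ * ε := by
  have hsub : P - y = -(μ • b P) := by
    rw [sub_eq_iff_eq_add]
    exact hP.trans (by abel)
  rw [hsub, norm_neg, norm_smul]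
  gcongr

theorem norm_smul_sub_smul_le_of_mem_closedBall (hd : DifferentiableOn ℂ b (Metric.ball y R))
    (hb : ∀ v ∈ Metric.ball y R, ‖b v‖ ≤ ε) (hμ : ‖μ‖ * ε < R)
    (hP : P ∈ Metric.closedBall y (‖μ‖ * ε)) (hP' : P' ∈ Metric.closedBall y (‖μ‖ * ε)) :
    ‖μ • b P' - μ • b P‖ ≤ ‖μ‖ * (ε / (R - ‖μ‖ * ε)) * ‖P' - P‖ := by
  rw [← add_sub_cancel (‖μ‖ * ε) R] at hd hb
  rw [← smul_sub, norm_smul, mul_assoc]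
  gcongr
  exact norm_sub_le_of_forall_mem_ball (sub_pos.2 hμ) hd hb hP hP'

theorem mul_div_sub_mul_lt_one (hε : 0 ≤ ε) (hμ : 2 * ‖μ‖ * ε < R) :
    ‖μ‖ * (ε / (R - ‖μ‖ * ε)) < 1 := by
  have hμε : 0 ≤ ‖μ‖ * ε := by positivity
  rw [← mul_div_assoc, div_lt_one (by linarith)]
  linarith

theorem eq_of_eq_sub_smul (hd : DifferentiableOn ℂ b (Metric.ball y R))
    (hb : ∀ v ∈ Metric.ball y R, ‖b v‖ ≤ ε) (hε : 0 ≤ ε) (hμ : 2 * ‖μ‖ * ε < R)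
    (hPR : P ∈ Metric.ball y R) (hP : P = y - μ • b P)
    (hPR' : P' ∈ Metric.ball y R) (hP' : P' = y - μ • b P') : P' = P := by
  have hμε : 0 ≤ ‖μ‖ * ε := by positivity
  have hcontr := norm_smul_sub_smul_le_of_mem_closedBall hd hb (by linarith)
    (mem_closedBall_iff_norm.2 (norm_sub_le_of_eq_sub_smul (hb P hPR) hP))
    (mem_closedBall_iff_norm.2 (norm_sub_le_of_eq_sub_smul (hb P' hPR') hP'))
  have hsub : P' - P = μ • b P - μ • b P' := by
    nth_rewrite 1 [hP, hP']
    abel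
  rw [norm_sub_rev, ← hsub] at hcontr
  refine sub_eq_zero.1 (norm_eq_zero.1 (le_antisymm ?_ (norm_nonneg _)))
  nlinarith [mul_div_sub_mul_lt_one hε hμ, norm_nonneg (P' - P)]

variable [CompleteSpace V]

theorem exists_eq_sub_smul (hd : DifferentiableOn ℂ b (Metric.ball y R))
    (hb : ∀ v ∈ Metric.ball y R, ‖b v‖ ≤ ε) (hε : 0 ≤ ε) (hμ : 2 * ‖μ‖ * ε < R) :
    ∃ P ∈ Metric.closedBall y (‖μ‖ * ε), P = y - μ • b P := by
  have hμε : 0 ≤ ‖μ‖ * ε := by positivity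
  have hsub : Metric.closedBall y (‖μ‖ * ε) ⊆ Metric.ball y R :=
    Metric.closedBall_subset_ball (by linarith)
  have hmaps : Set.MapsTo (fun P => y - μ • b P) (Metric.closedBall y (‖μ‖ * ε))
      (Metric.closedBall y (‖μ‖ * ε)) := by
    intro P hP
    rw [mem_closedBall_iff_norm, sub_sub_cancel_left, norm_neg, norm_smul]
    gcongr
    exact hb P (hsub hP)
  have hcontr : ContractingWith (‖μ‖ * (ε / (R - ‖μ‖ * ε))).toNNReal
      (Set.MapsTo.restrict _ _ _ hmaps) := by
    refine ⟨Real.toNNReal_lt_one.2 (mul_div_sub_mul_lt_one hε hμ),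
      LipschitzWith.of_dist_le_mul fun P P' => ?_⟩
    have hR : 0 < R - ‖μ‖ * ε := by linarith
    rw [Real.coe_toNNReal _ (by positivity), Subtype.dist_eq, Subtype.dist_eq, dist_eq_norm,
      dist_eq_norm, Set.MapsTo.val_restrict_apply, Set.MapsTo.val_restrict_apply,
      sub_sub_sub_cancel_left, norm_sub_rev (P : V)]
    exact norm_smul_sub_smul_le_of_mem_closedBall hd hb (by linarith) P.2 P'.2
  obtain ⟨P, hP, hfix, -⟩ := hcontr.exists_fixedPoint' Metric.isClosed_closedBall.isComplete
    hmaps (Metric.mem_closedBall_self hμε) (edist_ne_top _ _)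
  exact ⟨P, hP, hfix.symm⟩

theorem exists_analyticAt_fixedPoint {W : Type*} [NormedAddCommGroup W] [NormedSpace ℂ W]
    [CompleteSpace W] {Ψ : W × V → V} {w : W} {p : V} {L : V →L[ℂ] V}
    (hΨ : AnalyticAt ℂ Ψ (w, p)) (hfix : Ψ (w, p) = p)
    (hL : HasFDerivAt (fun v => Ψ (w, v)) L p) (hL₁ : ‖L‖ < 1) :
    ∃ φ : W → V, AnalyticAt ℂ φ w ∧ φ w = p ∧ ∀ᶠ z in 𝓝 w, Ψ (z, φ z) = φ z := by
  set Θ : W × V → V := fun z => z.2 - Ψ z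
  have hΘ : AnalyticAt ℂ Θ (w, p) := analyticAt_snd.sub hΨ
  have hΘ₀ : Θ (w, p) = 0 := sub_eq_zero.2 hfix.symm
  have hpartial : fderiv ℂ Θ (w, p) ∘L ContinuousLinearMap.inr ℂ W V = 1 - L :=
    (hΘ.differentiableAt.hasFDerivAt.comp p (hasFDerivAt_prodMk_right w p)).unique
      ((hasFDerivAt_id p).sub hL)
  have hinv : (fderiv ℂ Θ (w, p) ∘L ContinuousLinearMap.inr ℂ W V).IsInvertible := by
    rw [hpartial]
    exact ⟨ContinuousLinearEquiv.unitsEquiv ℂ V (Units.oneSub L hL₁), rfl⟩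
  have hsmooth : ContDiffAt ℂ ⊤ Θ (w, p) := hΘ.contDiffAt
  have hne : (⊤ : WithTop ℕ∞) ≠ 0 := by simp
  refine ⟨hsmooth.implicitFunction hne hinv,
    (hsmooth.contDiffAt_implicitFunction hne hinv).analyticAt,
    hsmooth.implicitFunction_apply_self hne hinv, ?_⟩
  filter_upwards [hsmooth.eventually_apply_implicitFunction hne hinv] with z hz
  rw [hΘ₀] at hz
  exact (sub_eq_zero.1 hz).symm

end FixedPoints

/-- A map near the identity depending on a complex parameter `μ`: where the `1`-Lipschitz gauge
`ρ` leaves room for displacements of size `2 ‖μ‖ ε` below the level `δ`, the family is jointly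
analytic and `F μ` moves points by at most `‖μ‖ ε`. The gauge stands for the distance to a fixed
set. -/
structure NearIdentityFamily {E : Type*} [NormedAddCommGroup E] [NormedSpace ℂ E] (ρ : E → ℝ)
    (δ ε : ℝ) (F : ℂ → E → E) : Prop where
  lipschitz : LipschitzWith 1 ρ
  pos : 0 < ε
  analyticAt : ∀ μ x, ρ x + 2 * ‖μ‖ * ε < δ →
    AnalyticAt ℂ (fun z : ℂ × E => F z.1 z.2) (μ, x)
  norm_sub_le : ∀ μ x, ρ x + 2 * ‖μ‖ * ε < δ → ‖F μ x - x‖ ≤ ‖μ‖ * ε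

/-- `y` is the image of `x` under the step of the semi-implicit (symplectic Euler) scheme with
step size `μ` and increments `a` in the second and `-b` in the first component. For `a = ∂_P S`
and `b = ∂_q S` this is the symplectic map with generating function `P · q + μ S (P, q)`. -/
structure SemiImplicitStep {V : Type*} [AddCommGroup V] [Module ℂ V] (a b : V × V → V) (μ : ℂ)
    (x y : V × V) : Prop where
  fst_eq : x.1 = y.1 + μ • b (y.1, x.2)
  snd_eq : y.2 = x.2 + μ • a (y.1, x.2)

section Families

theorem le_add_norm_sub_of_lipschitzWith_one {E : Type*} [SeminormedAddCommGroup E] {ρ : E → ℝ}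
    (hρ : LipschitzWith 1 ρ) (x y : E) : ρ x ≤ ρ y + ‖x - y‖ := by
  simpa [dist_eq_norm] using hρ.le_add_mul x y

variable {V : Type*} [NormedAddCommGroup V] {ρ : V × V → ℝ} {δ ε : ℝ}

theorem gauge_le_of_norm_fst_sub_le (hρ : LipschitzWith 1 ρ) {x : V × V} {P : V} {r : ℝ}
    (hP : ‖P - x.1‖ ≤ r) : ρ (P, x.2) ≤ ρ x + r := by
  have h := le_add_norm_sub_of_lipschitzWith_one hρ (P, x.2) x
  rw [Prod.norm_def, Prod.fst_sub, Prod.snd_sub, sub_self, norm_zero,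
    max_eq_left (norm_nonneg _)] at h
  linarith

theorem gauge_lt_of_mem_ball (hρ : LipschitzWith 1 ρ) {x : V × V} {P : V}
    (hP : P ∈ Metric.ball x.1 (δ - ρ x)) : ρ (P, x.2) < δ := by
  linarith [gauge_le_of_norm_fst_sub_le hρ (le_refl ‖P - x.1‖), mem_ball_iff_norm.1 hP]

variable [NormedSpace ℂ V] {a b : V × V → V} {μ : ℂ} {x y y' : V × V}

theorem SemiImplicitStep.norm_fst_sub_le (h : SemiImplicitStep a b μ x y)
    (hb : ‖b (y.1, x.2)‖ ≤ ε) : ‖y.1 - x.1‖ ≤ ‖μ‖ * ε :=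
  norm_sub_le_of_eq_sub_smul (b := fun P => b (P, x.2)) hb (eq_sub_of_add_eq h.fst_eq.symm)

theorem SemiImplicitStep.norm_sub_le (h : SemiImplicitStep a b μ x y)
    (ha : ‖a (y.1, x.2)‖ ≤ ε) (hb : ‖b (y.1, x.2)‖ ≤ ε) : ‖y - x‖ ≤ ‖μ‖ * ε := by
  refine max_le (h.norm_fst_sub_le hb) ?_
  rw [Prod.snd_sub, h.snd_eq, add_sub_cancel_left, norm_smul]
  gcongr

theorem differentiableOn_slice (hρ : LipschitzWith 1 ρ)
    (hb : ∀ x, ρ x ≤ δ → AnalyticAt ℂ b x) (x : V × V) :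
    DifferentiableOn ℂ (fun P => b (P, x.2)) (Metric.ball x.1 (δ - ρ x)) := fun P hP =>
  ((hb _ (gauge_lt_of_mem_ball hρ hP).le).differentiableAt.fun_comp' P
    (by fun_prop)).differentiableWithinAt

theorem SemiImplicitStep.eq (hρ : LipschitzWith 1 ρ) (hε : 0 ≤ ε)
    (hb : ∀ x, ρ x ≤ δ → AnalyticAt ℂ b x) (hbε : ∀ x, ρ x ≤ δ → ‖b x‖ ≤ ε)
    (hx : ρ x + 2 * ‖μ‖ * ε < δ) (h : SemiImplicitStep a b μ x y) (hy : ρ (y.1, x.2) ≤ δ)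
    (h' : SemiImplicitStep a b μ x y') (hy' : ρ (y'.1, x.2) ≤ δ) : y' = y := by
  have hμε : 0 ≤ ‖μ‖ * ε := by positivity
  have hmem : ∀ {z : V × V}, SemiImplicitStep a b μ x z → ρ (z.1, x.2) ≤ δ →
      z.1 ∈ Metric.ball x.1 (δ - ρ x) := fun hz hzδ =>
    mem_ball_iff_norm.2 ((hz.norm_fst_sub_le (hbε _ hzδ)).trans_lt (by linarith))
  have hfst : y'.1 = y.1 := eq_of_eq_sub_smul (differentiableOn_slice hρ hb x)
    (fun P hP => hbε _ (gauge_lt_of_mem_ball hρ hP).le) hε (by linarith) (hmem h hy)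
    (eq_sub_of_add_eq h.fst_eq.symm) (hmem h' hy') (eq_sub_of_add_eq h'.fst_eq.symm)
  exact Prod.ext hfst (by rw [h.snd_eq, h'.snd_eq, hfst])

theorem norm_smul_fderiv_slice_lt_one (hρ : LipschitzWith 1 ρ) (hε : 0 ≤ ε)
    (hb : ∀ x, ρ x ≤ δ → AnalyticAt ℂ b x) (hbε : ∀ x, ρ x ≤ δ → ‖b x‖ ≤ ε)
    (hx : ρ x + 2 * ‖μ‖ * ε < δ) (h : SemiImplicitStep a b μ x y) (hy : ρ (y.1, x.2) ≤ δ) :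
    ‖μ • fderiv ℂ (fun P => b (P, x.2)) y.1‖ < 1 := by
  have hμε : 0 ≤ ‖μ‖ * ε := by positivity
  have hsub : Metric.ball y.1 (δ - ρ x - ‖μ‖ * ε) ⊆ Metric.ball x.1 (δ - ρ x) :=
    Metric.ball_subset_ball' (by linarith [dist_eq_norm y.1 x.1, h.norm_fst_sub_le (hbε _ hy)])
  rw [norm_smul]
  refine lt_of_le_of_lt ?_ (mul_div_sub_mul_lt_one (R := δ - ρ x) hε (by linarith))
  gcongr
  exact norm_fderiv_le_of_forall_mem_ball (by linarith)
    ((differentiableOn_slice hρ hb x).mono hsub)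
    fun P hP => hbε _ (gauge_lt_of_mem_ball hρ (hsub hP)).le

variable [CompleteSpace V]

theorem exists_semiImplicitStep (hρ : LipschitzWith 1 ρ) (hε : 0 ≤ ε)
    (hb : ∀ x, ρ x ≤ δ → AnalyticAt ℂ b x) (hbε : ∀ x, ρ x ≤ δ → ‖b x‖ ≤ ε)
    (hx : ρ x + 2 * ‖μ‖ * ε < δ) : ∃ y, SemiImplicitStep a b μ x y ∧ ρ (y.1, x.2) < δ := by
  have hμε : 0 ≤ ‖μ‖ * ε := by positivity
  obtain ⟨P, hPx, hP⟩ := exists_eq_sub_smul (differentiableOn_slice hρ hb x)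
    (fun P hP => hbε _ (gauge_lt_of_mem_ball hρ hP).le) hε (μ := μ) (by linarith)
  refine ⟨(P, x.2 + μ • a (P, x.2)), ⟨eq_add_of_sub_eq hP.symm, rfl⟩, ?_⟩
  linarith [gauge_le_of_norm_fst_sub_le hρ (mem_closedBall_iff_norm.1 hPx)]

theorem analyticAt_fst_of_semiImplicitStep {F : ℂ → V × V → V × V} (hρ : LipschitzWith 1 ρ)
    (hε : 0 ≤ ε) (hb : ∀ x, ρ x ≤ δ → AnalyticAt ℂ b x) (hbε : ∀ x, ρ x ≤ δ → ‖b x‖ ≤ ε)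
    (hF : ∀ μ x, ρ x + 2 * ‖μ‖ * ε < δ →
      SemiImplicitStep a b μ x (F μ x) ∧ ρ ((F μ x).1, x.2) < δ)
    (hx : ρ x + 2 * ‖μ‖ * ε < δ) :
    AnalyticAt ℂ (fun z : ℂ × (V × V) => (F z.1 z.2).1) (μ, x) := by
  obtain ⟨hstep, hδ⟩ := hF μ x hx
  have hbslice := (hb _ hδ.le).differentiableAt.fun_comp' (F μ x).1
    (f := fun P : V => (P, x.2)) (by fun_prop)
  have hΨ : AnalyticAt ℂ (fun w : (ℂ × (V × V)) × V => w.1.2.1 - w.1.1 • b (w.2, w.1.2.2))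
      ((μ, x), (F μ x).1) := by
    have hb' : AnalyticAt ℂ (fun w : (ℂ × (V × V)) × V => b (w.2, w.1.2.2))
        ((μ, x), (F μ x).1) :=
      AnalyticAt.fun_comp (f := fun w : (ℂ × (V × V)) × V => (w.2, w.1.2.2)) (hb _ hδ.le)
        (by fun_prop)
    exact AnalyticAt.fun_sub (f := fun w : (ℂ × (V × V)) × V => w.1.2.1) (by fun_prop)
      (AnalyticAt.fun_smul (f := fun w : (ℂ × (V × V)) × V => w.1.1) (by fun_prop) hb')
  obtain ⟨φ, hφ, hφx, hφfix⟩ := exists_analyticAt_fixedPoint hΨ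
    (eq_sub_of_add_eq hstep.fst_eq.symm).symm
    ((hbslice.hasFDerivAt.const_smul μ).const_sub x.1)
    (by simpa using norm_smul_fderiv_slice_lt_one hρ hε hb hbε hx hstep hδ.le)
  refine hφ.congr ?_
  have hφδ : ∀ᶠ z : ℂ × (V × V) in 𝓝 (μ, x), ρ (φ z, z.2.2) < δ := by
    refine ContinuousAt.eventually_lt ?_ continuousAt_const (by simpa [hφx] using hδ)
    exact hρ.continuous.continuousAt.comp (hφ.continuousAt.prodMk (by fun_prop))
  have hzδ : ∀ᶠ z : ℂ × (V × V) in 𝓝 (μ, x), ρ z.2 + 2 * ‖z.1‖ * ε < δ := by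
    have := hρ.continuous
    exact ContinuousAt.eventually_lt (by fun_prop) continuousAt_const hx
  filter_upwards [hφfix, hφδ, hzδ] with z hz hzφ hzδ
  have hφstep : SemiImplicitStep a b z.1 z.2 (φ z, z.2.2 + z.1 • a (φ z, z.2.2)) :=
    ⟨eq_add_of_sub_eq hz, rfl⟩
  exact congrArg Prod.fst
    ((hF z.1 z.2 hzδ).1.eq hρ hε hb hbε hzδ (hF z.1 z.2 hzδ).2.le hφstep hzφ.le)

theorem analyticAt_of_semiImplicitStep {F : ℂ → V × V → V × V} (hρ : LipschitzWith 1 ρ)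
    (hε : 0 ≤ ε) (ha : ∀ x, ρ x ≤ δ → AnalyticAt ℂ a x) (hb : ∀ x, ρ x ≤ δ → AnalyticAt ℂ b x)
    (hbε : ∀ x, ρ x ≤ δ → ‖b x‖ ≤ ε)
    (hF : ∀ μ x, ρ x + 2 * ‖μ‖ * ε < δ →
      SemiImplicitStep a b μ x (F μ x) ∧ ρ ((F μ x).1, x.2) < δ)
    (hx : ρ x + 2 * ‖μ‖ * ε < δ) :
    AnalyticAt ℂ (fun z : ℂ × (V × V) => F z.1 z.2) (μ, x) := by
  have hfst := analyticAt_fst_of_semiImplicitStep hρ hε hb hbε hF hx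
  have ha' : AnalyticAt ℂ (fun z : ℂ × (V × V) => a ((F z.1 z.2).1, z.2.2)) (μ, x) :=
    AnalyticAt.fun_comp (f := fun z : ℂ × (V × V) => ((F z.1 z.2).1, z.2.2))
      (ha _ (hF μ x hx).2.le) (hfst.prod (by fun_prop))
  have hsnd : AnalyticAt ℂ (fun z : ℂ × (V × V) => z.2.2 + z.1 • a ((F z.1 z.2).1, z.2.2))
      (μ, x) :=
    AnalyticAt.fun_add (f := fun z : ℂ × (V × V) => z.2.2) (by fun_prop)
      (AnalyticAt.fun_smul (f := fun z : ℂ × (V × V) => z.1) (by fun_prop) ha')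
  refine (hfst.prod hsnd).congr ?_
  have hzδ : ∀ᶠ z : ℂ × (V × V) in 𝓝 (μ, x), ρ z.2 + 2 * ‖z.1‖ * ε < δ := by
    have := hρ.continuous
    exact ContinuousAt.eventually_lt (by fun_prop) continuousAt_const hx
  filter_upwards [hzδ] with z hz
  exact Prod.ext rfl (hF z.1 z.2 hz).1.snd_eq.symm

theorem exists_nearIdentityFamily_semiImplicitStep (hρ : LipschitzWith 1 ρ) (hε : 0 < ε)
    (ha : ∀ x, ρ x ≤ δ → AnalyticAt ℂ a x) (hb : ∀ x, ρ x ≤ δ → AnalyticAt ℂ b x)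
    (haε : ∀ x, ρ x ≤ δ → ‖a x‖ ≤ ε) (hbε : ∀ x, ρ x ≤ δ → ‖b x‖ ≤ ε) :
    ∃ F : ℂ → V × V → V × V, NearIdentityFamily ρ δ ε F ∧ ∀ μ x, ρ x + 2 * ‖μ‖ * ε < δ →
      SemiImplicitStep a b μ x (F μ x) ∧ ρ ((F μ x).1, x.2) < δ := by
  have hex := fun (μ : ℂ) (x : V × V) (hx : ρ x + 2 * ‖μ‖ * ε < δ) =>
    exists_semiImplicitStep (a := a) hρ hε.le hb hbε hx
  choose! F hF using hex
  refine ⟨F, ⟨hρ, hε, fun μ x hx => analyticAt_of_semiImplicitStep hρ hε.le ha hb hbε hF hx,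
    fun μ x hx => ?_⟩, hF⟩
  obtain ⟨hstep, hδ⟩ := hF μ x hx
  exact hstep.norm_sub_le (haε _ hδ.le) (hbε _ hδ.le)

end Families

end ImplicitMaps

section NearIdentityFamilies

theorem exists_bound_of_isBigO_fst_pow {E G : Type*} [NormedAddCommGroup E] [NormedSpace ℂ E]
    [NormedAddCommGroup G] [NormedSpace ℂ G] {g : ℂ × E → G} {x₀ : E} {k : ℕ}
    (hg : ∀ᶠ z in 𝓝 ((0 : ℂ), x₀), AnalyticAt ℂ g z)
    (hO : g =O[𝓝 ((0 : ℂ), x₀)] fun z => z.1 ^ k) :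
    ∃ C r : ℝ, 0 ≤ C ∧ 0 < r ∧ ∀ μ : ℂ, ‖μ‖ < r → ∀ x ∈ Metric.ball x₀ r,
      DifferentiableAt ℂ (fun y => g (μ, y)) x ∧ ‖g (μ, x)‖ ≤ C * ‖μ‖ ^ k := by
  obtain ⟨C, hC₀, hC⟩ := hO.exists_nonneg
  obtain ⟨r, hr, hball⟩ := Metric.eventually_nhds_iff_ball.1 (hg.and hC.bound)
  refine ⟨C, r, hC₀, hr, fun μ hμ x hx => ?_⟩
  have hz : (μ, x) ∈ Metric.ball ((0 : ℂ), x₀) r := by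
    rw [← ball_prod_same]
    exact ⟨mem_ball_zero_iff.2 hμ, hx⟩
  exact ⟨(hball _ hz).1.differentiableAt.fun_comp' x (f := fun y => (μ, y)) (by fun_prop),
    by simpa using (hball _ hz).2⟩

namespace NearIdentityFamily

variable {E : Type*} [NormedAddCommGroup E] [NormedSpace ℂ E] {ρ : E → ℝ} {δ ε : ℝ}
  {F : ℂ → E → E} {μ : ℂ} {x x₀ : E}

theorem gauge_le (h : NearIdentityFamily ρ δ ε F) (x y : E) : ρ x ≤ ρ y + ‖x - y‖ :=
  le_add_norm_sub_of_lipschitzWith_one h.lipschitz x y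

theorem norm_mul_nonneg (h : NearIdentityFamily ρ δ ε F) (μ : ℂ) : 0 ≤ ‖μ‖ * ε :=
  mul_nonneg (norm_nonneg μ) h.pos.le

theorem norm_iterate_sub_le (h : NearIdentityFamily ρ δ ε F) (n : ℕ)
    (hx : ρ x + (n + 1) * ‖μ‖ * ε < δ) : ‖(F μ)^[n] x - x‖ ≤ n * ‖μ‖ * ε := by
  have hμε := h.norm_mul_nonneg μ
  induction n with
  | zero => simp
  | succ n ih =>
    push_cast at hx ⊢
    have ih := ih (by linarith)
    rw [Function.iterate_succ_apply']
    have hstep := h.norm_sub_le μ ((F μ)^[n] x) (by linarith [h.gauge_le ((F μ)^[n] x) x])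
    linarith [norm_sub_le_norm_sub_add_norm_sub (F μ ((F μ)^[n] x)) ((F μ)^[n] x) x]

theorem gauge_iterate_le (h : NearIdentityFamily ρ δ ε F) (n : ℕ)
    (hx : ρ x + (n + 1) * ‖μ‖ * ε < δ) : ρ ((F μ)^[n] x) ≤ ρ x + n * ‖μ‖ * ε := by
  linarith [h.gauge_le ((F μ)^[n] x) x, h.norm_iterate_sub_le n hx]

theorem norm_iterate_succ_sub_iterate_le (h : NearIdentityFamily ρ δ ε F) (n : ℕ)
    (hx : ρ x + (n + 2) * ‖μ‖ * ε < δ) : ‖(F μ)^[n + 1] x - (F μ)^[n] x‖ ≤ ‖μ‖ * ε := by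
  have hμε := h.norm_mul_nonneg μ
  rw [Function.iterate_succ_apply']
  exact h.norm_sub_le μ _ (by linarith [h.gauge_iterate_le (μ := μ) (x := x) n (by linarith)])

theorem analyticAt_iterate (h : NearIdentityFamily ρ δ ε F) (n : ℕ)
    (hx : ρ x + (n + 1) * ‖μ‖ * ε < δ) :
    AnalyticAt ℂ (fun z : ℂ × E => (F z.1)^[n] z.2) (μ, x) := by
  have hμε := h.norm_mul_nonneg μ
  induction n with
  | zero => exact analyticAt_snd
  | succ n ih =>
    push_cast at hx
    have hn := h.analyticAt μ ((F μ)^[n] x)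
      (by linarith [h.gauge_iterate_le (μ := μ) (x := x) n (by linarith)])
    simp_rw [Function.iterate_succ_apply']
    exact AnalyticAt.fun_comp (f := fun z : ℂ × E => (z.1, (F z.1)^[n] z.2)) hn
      (analyticAt_fst.prod (ih (by linarith)))

theorem analyticAt_finDiff (h : NearIdentityFamily ρ δ ε F) (k : ℕ)
    (hx : ρ x + (k + 1) * ‖μ‖ * ε < δ) :
    AnalyticAt ℂ (fun z : ℂ × E => finDiff (F z.1) k z.2) (μ, x) := by
  have hμε := h.norm_mul_nonneg μ
  induction k generalizing x with
  | zero => exact analyticAt_snd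
  | succ k ih =>
    push_cast at hx
    have hk : 0 ≤ k * (‖μ‖ * ε) := by positivity
    have hF := h.norm_sub_le μ x (by linarith)
    have hstep := AnalyticAt.fun_comp (f := fun z : ℂ × E => (z.1, F z.1 z.2)) (x := (μ, x))
      (ih (x := F μ x) (by linarith [h.gauge_le (F μ x) x]))
      (analyticAt_fst.prod (h.analyticAt μ x (by linarith)))
    exact hstep.fun_sub (ih (by linarith))

theorem eventually_room (h : NearIdentityFamily ρ δ ε F) (hx₀ : ρ x₀ < δ) {r : ℝ} (hr : 0 < r) :
    ∀ᶠ z : ℂ × E in 𝓝 ((0 : ℂ), x₀), ‖z.1‖ < r ∧ ρ z.2 + 2 * ‖z.1‖ * ε < δ ∧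
      ‖z.2 - x₀‖ + ‖z.1‖ * ε < r := by
  have hρ := h.lipschitz.continuous
  refine .and ?_ (.and ?_ ?_) <;>
    exact ContinuousAt.eventually_lt (by fun_prop) continuousAt_const (by simpa)

variable [CompleteSpace E]

theorem eventually_analyticAt_finDiff (h : NearIdentityFamily ρ δ ε F) (k : ℕ) (hx₀ : ρ x₀ < δ) :
    ∀ᶠ z in 𝓝 ((0 : ℂ), x₀), AnalyticAt ℂ (fun z : ℂ × E => finDiff (F z.1) k z.2) z :=
  (h.analyticAt_finDiff k (by simpa using hx₀)).eventually_analyticAt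

theorem isBigO_finDiff (h : NearIdentityFamily ρ δ ε F) (k : ℕ) (hx₀ : ρ x₀ < δ) :
    (fun z : ℂ × E => finDiff (F z.1) k z.2) =O[𝓝 ((0 : ℂ), x₀)] fun z => z.1 ^ k := by
  induction k with
  | zero =>
    simp only [pow_zero]
    exact continuousAt_snd.tendsto.isBigO_one ℂ
  | succ k ih =>
    obtain ⟨C, r, hC, hr, hbound⟩ :=
      exists_bound_of_isBigO_fst_pow (h.eventually_analyticAt_finDiff k hx₀) ih
    refine IsBigO.of_bound (C / (r / 2) * ε) ?_
    filter_upwards [h.eventually_room hx₀ (half_pos hr)] with ⟨μ, x⟩ ⟨hμ, hx, hxr⟩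
    have hF := h.norm_sub_le μ x hx
    have hμε := h.norm_mul_nonneg μ
    have hmem : ∀ y ∈ Metric.ball x₀ (r / 2 + r / 2), y ∈ Metric.ball x₀ r := by
      simp only [add_halves, imp_self, implies_true]
    calc ‖finDiff (F μ) k (F μ x) - finDiff (F μ) k x‖
        ≤ C * ‖μ‖ ^ k / (r / 2) * ‖F μ x - x‖ :=
          norm_sub_le_of_forall_mem_ball (c := x₀) (half_pos hr)
            (fun y hy =>
              (hbound μ (by linarith) y (hmem y hy)).1.differentiableWithinAt)
            (fun y hy => (hbound μ (by linarith) y (hmem y hy)).2)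
            (mem_closedBall_iff_norm.2 (by linarith))
            (mem_closedBall_iff_norm.2
              (by linarith [norm_sub_le_norm_sub_add_norm_sub (F μ x) x x₀]))
      _ ≤ C * ‖μ‖ ^ k / (r / 2) * (‖μ‖ * ε) := by gcongr
      _ = C / (r / 2) * ε * ‖μ ^ (k + 1)‖ := by rw [norm_pow]; ring

theorem isBigO_finDiff_const (h : NearIdentityFamily ρ δ ε F) (k : ℕ) (hx : ρ x < δ) :
    (fun μ => finDiff (F μ) k x) =O[𝓝 0] fun μ => μ ^ k :=
  (h.isBigO_finDiff k hx).comp_tendsto (f := fun z : ℂ × E => finDiff (F z.1) k z.2)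
    (Continuous.tendsto' (f := fun μ : ℂ => (μ, x)) (by fun_prop) 0 (0, x) rfl)

theorem norm_finDiff_succ_le (h : NearIdentityFamily ρ δ ε F) (k : ℕ) {R : ℝ}
    (hx : ρ x + (k + 2) * R * ε ≤ δ) (hμ : ‖μ‖ < R) :
    ‖finDiff (F μ) (k + 1) x‖ ≤ ‖μ‖ * ε * (2 * ‖μ‖ / R) ^ k := by
  have hR : 0 < R := (norm_nonneg μ).trans_lt hμ
  have hε := h.pos
  have hroom : ∀ z ∈ Metric.ball (0 : ℂ) R, ρ x + (k + 2) * ‖z‖ * ε < δ := by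
    intro z hz
    rw [mem_ball_zero_iff] at hz
    exact lt_of_lt_of_le (by gcongr) hx
  have hxδ : ρ x < δ := lt_of_lt_of_le (lt_add_of_pos_right _ (by positivity)) hx
  have hdiff : DifferentiableOn ℂ (fun z => finDiff (F z) (k + 1) x) (Metric.ball 0 R) := by
    intro z hz
    have hz' := h.analyticAt_finDiff (k + 1) (μ := z) (x := x)
      (by have := hroom z hz; push_cast; linarith)
    exact (hz'.differentiableAt.fun_comp' z (f := fun y => (y, x))
      (by fun_prop)).differentiableWithinAt
  have hbound : ∀ z ∈ Metric.ball (0 : ℂ) R, ‖finDiff (F z) (k + 1) x‖ ≤ 2 ^ k * (R * ε) := by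
    intro z hz
    rw [finDiff_eq_fwdDiff_iterate]
    calc ‖(fwdDiff 1)^[k + 1] (fun n => (F z)^[n] x) 0‖ ≤ 2 ^ k * (‖z‖ * ε) := by
          refine norm_fwdDiff_iterate_succ_le (fun n hn => ?_) le_rfl
          have hn' : (n : ℝ) ≤ k := mod_cast Nat.lt_succ_iff.1 hn
          exact h.norm_iterate_succ_sub_iterate_le n (lt_of_le_of_lt (by gcongr) (hroom z hz))
      _ ≤ 2 ^ k * (R * ε) := by
          rw [mem_ball_zero_iff] at hz
          gcongr
  calc ‖finDiff (F μ) (k + 1) x‖ ≤ 2 ^ k * (R * ε) * (‖μ‖ / R) ^ (k + 1) :=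
        norm_le_mul_div_pow_of_isBigO hdiff hbound (h.isBigO_finDiff_const (k + 1) hxδ) hμ
    _ = ‖μ‖ * ε * (2 * ‖μ‖ / R) ^ k := by
        rw [pow_succ, mul_div_assoc, mul_pow]
        field_simp

end NearIdentityFamily

end NearIdentityFamilies

section NewtonCurves

section Algebra

variable {E : Type*} [AddCommGroup E] [Module ℂ E]

/-- The polynomial curve of degree `m` through the points `x, f x, …, f^[m] x` of an orbit, at the
times `0, 1, …, m`, in Newton's form. -/
noncomputable def newtonCurve (f : E → E) (m : ℕ) (x : E) (s : ℂ) : E :=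
  ∑ k ∈ Finset.range (m + 1), (binomialPoly ℂ k).eval s • finDiff f k x

/-- The time derivative of `newtonCurve`. -/
noncomputable def newtonVelocity (f : E → E) (m : ℕ) (x : E) (s : ℂ) : E :=
  ∑ k ∈ Finset.range (m + 1), (binomialPoly ℂ k).derivative.eval s • finDiff f k x

/-- The vector field whose value at `x` is the initial velocity of the Newton curve of `x`: the
interpolating vector field of order `m` of a self-map of a complex vector space. -/
noncomputable def newtonField (f : E → E) (m : ℕ) (x : E) : E :=
  newtonDeriv ℂ m fun n => f^[n] x

variable (f : E → E) (m : ℕ) (x : E) (s : ℂ)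

theorem newtonField_eq_sum :
    newtonField f m x =
      ∑ k ∈ Finset.range m, ((-1 : ℂ) ^ k / (k + 1)) • finDiff f (k + 1) x := by
  simp_rw [newtonField, newtonDeriv, finDiff_eq_fwdDiff_iterate]

theorem newtonCurve_natCast {n : ℕ} (hn : n ≤ m) : newtonCurve f m x n = f^[n] x := by
  rw [eq_sum_choose_smul_fwdDiff (𝕜 := ℂ) (fun n => f^[n] x) hn]
  simp_rw [newtonCurve, eval_natCast_binomialPoly, finDiff_eq_fwdDiff_iterate]

theorem newtonCurve_eq_add_sum :
    newtonCurve f m x s =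
      x + ∑ k ∈ Finset.range m, (binomialPoly ℂ (k + 1)).eval s • finDiff f (k + 1) x := by
  rw [newtonCurve, Finset.sum_range_succ', binomialPoly_zero, finDiff, Polynomial.eval_one,
    one_smul, add_comm]

theorem newtonVelocity_eq_sum :
    newtonVelocity f m x s =
      ∑ k ∈ Finset.range m,
        (binomialPoly ℂ (k + 1)).derivative.eval s • finDiff f (k + 1) x := by
  rw [newtonVelocity, Finset.sum_range_succ', binomialPoly_zero, Polynomial.derivative_one,
    Polynomial.eval_zero, zero_smul, add_zero]

theorem newtonCurve_add_one_sub :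
    newtonCurve f m x (s + 1) - newtonCurve f m x s =
      ∑ k ∈ Finset.range m, (binomialPoly ℂ k).eval s • finDiff f (k + 1) x := by
  rw [newtonCurve_eq_add_sum, newtonCurve_eq_add_sum, add_sub_add_left_eq_sub,
    ← Finset.sum_sub_distrib]
  exact Finset.sum_congr rfl fun k _ => by
    rw [← sub_smul, eval_add_one_binomialPoly_succ, add_sub_cancel_left]

theorem newtonVelocity_eq_newtonDeriv :
    newtonVelocity f m x s = newtonDeriv ℂ m fun n => newtonCurve f m x (s + n) := by
  simp_rw [newtonDeriv_eq_sum, newtonCurve, Finset.smul_sum]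
  rw [Finset.sum_comm]
  refine Finset.sum_congr rfl fun k hk => ?_
  have hdeg := (natDegree_binomialPoly_le (𝕜 := ℂ) k).trans (Finset.mem_range_succ_iff.1 hk)
  rw [← newtonDeriv_eval_add hdeg s, newtonDeriv_eq_sum, Finset.sum_smul]
  simp_rw [smul_smul, smul_eq_mul]

theorem newtonVelocity_sub_newtonField :
    newtonVelocity f m x s - newtonField f m (newtonCurve f m x s) =
      newtonDeriv ℂ m fun n => newtonCurve f m x (s + n) - f^[n] (newtonCurve f m x s) := by
  rw [newtonVelocity_eq_newtonDeriv, newtonField, newtonDeriv_sub]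

end Algebra

theorem interpVF_eq_newtonField {d : ℕ} (f : CPhase d → CPhase d) (m : ℕ) (x : CPhase d) :
    interpVF d f m x = newtonField f m x := by
  rw [newtonField_eq_sum, interpVF, ← Finset.Ico_succ_right_eq_Icc, Finset.sum_Ico_eq_sum_range]
  simp [add_comm]

section Norm

variable {E : Type*} [NormedAddCommGroup E] [NormedSpace ℂ E] {f : E → E} {m : ℕ} {x : E} {s : ℂ}

theorem harmonic_le_natCast (m : ℕ) : (harmonic m : ℝ) ≤ m := by
  have hle : harmonic m ≤ m := by
    rw [harmonic, ← nsmul_one m]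
    refine (Finset.sum_le_card_nsmul _ _ 1 fun k _ => ?_).trans_eq (by rw [Finset.card_range])
    exact inv_le_one_of_one_le₀ (by exact_mod_cast Nat.le_add_left 1 k)
  exact_mod_cast hle

theorem norm_sum_smul_le_harmonic {c : ℕ → ℂ} {v : ℕ → E} {K : ℝ}
    (hc : ∀ k < m, ‖c k‖ ≤ 1 / (k + 1)) (hv : ∀ k < m, ‖v k‖ ≤ K) :
    ‖∑ k ∈ Finset.range m, c k • v k‖ ≤ harmonic m * K := by
  rw [harmonic, Rat.cast_sum, Finset.sum_mul]
  refine norm_sum_le_of_le _ fun k hk => ?_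
  rw [Finset.mem_range] at hk
  have hcast : (((k + 1 : ℕ) : ℚ)⁻¹ : ℚ) = (1 / (k + 1) : ℝ) := by push_cast; rw [one_div]
  rw [norm_smul, hcast]
  exact mul_le_mul (hc k hk) (hv k hk) (norm_nonneg _) (by positivity)

theorem norm_neg_one_pow_div_succ (k : ℕ) : ‖(-1 : ℂ) ^ k / (k + 1)‖ = 1 / (k + 1) := by
  rw [norm_div, norm_pow, norm_neg, norm_one, one_pow]
  exact congrArg (1 / ·) (by exact_mod_cast Complex.norm_natCast (k + 1))

theorem norm_newtonField_le {K : ℝ} (hK : ∀ k < m, ‖finDiff f (k + 1) x‖ ≤ K) :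
    ‖newtonField f m x‖ ≤ harmonic m * K := by
  rw [newtonField_eq_sum]
  exact norm_sum_smul_le_harmonic (fun k _ => (norm_neg_one_pow_div_succ k).le) hK

theorem norm_newtonCurve_sub_le_harmonic {K t : ℝ} (hK : ∀ k < m, ‖finDiff f (k + 1) x‖ ≤ K)
    (ht₀ : 0 ≤ t) (ht₁ : t ≤ 1) : ‖newtonCurve f m x t - x‖ ≤ harmonic m * K := by
  rw [newtonCurve_eq_add_sum, add_sub_cancel_left]
  exact norm_sum_smul_le_harmonic (fun k _ => norm_eval_binomialPoly_succ_le k ht₀ ht₁) hK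

theorem norm_newtonVelocity_le_harmonic {K t : ℝ} (hK : ∀ k < m, ‖finDiff f (k + 1) x‖ ≤ K)
    (ht₀ : 0 ≤ t) (ht₁ : t ≤ 1) : ‖newtonVelocity f m x t‖ ≤ harmonic m * K := by
  rw [newtonVelocity_eq_sum]
  exact norm_sum_smul_le_harmonic
    (fun k _ => norm_eval_derivative_binomialPoly_succ_le k ht₀ ht₁) hK

theorem norm_newtonCurve_sub_le {C r : ℝ} (hC : 0 ≤ C) (hr : 0 ≤ r)
    (hf : ∀ k < m, ‖finDiff f (k + 1) x‖ ≤ C * r ^ (k + 1)) (hs : (‖s‖ + m) * r ≤ 1) :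
    ‖newtonCurve f m x s - x‖ ≤ m * (C * ((‖s‖ + m) * r)) := by
  rw [newtonCurve_eq_add_sum, add_sub_cancel_left, ← nsmul_eq_mul]
  refine (norm_sum_le _ _).trans
    ((Finset.sum_le_card_nsmul _ _ _ fun k hk => ?_).trans_eq (by rw [Finset.card_range]))
  have hkm : ((k + 1 : ℕ) : ℝ) ≤ m := mod_cast Finset.mem_range.1 hk
  rw [norm_smul]
  calc ‖(binomialPoly ℂ (k + 1)).eval s‖ * ‖finDiff f (k + 1) x‖
      ≤ (‖s‖ + (k + 1 : ℕ)) ^ (k + 1) * (C * r ^ (k + 1)) :=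
        mul_le_mul (norm_eval_binomialPoly_le_pow _ s) (hf k (Finset.mem_range.1 hk))
          (norm_nonneg _) (by positivity)
    _ ≤ (‖s‖ + m) ^ (k + 1) * (C * r ^ (k + 1)) := by gcongr
    _ = C * ((‖s‖ + m) * r) ^ (k + 1) := by rw [mul_pow]; ring
    _ ≤ C * ((‖s‖ + m) * r) := by
        gcongr
        exact pow_le_of_le_one (by positivity) hs k.succ_ne_zero

theorem norm_newtonCurve_add_one_sub_le {C r : ℝ} (hC : 0 ≤ C) (hr : 0 ≤ r)
    (hf : ∀ k < m, ‖finDiff f (k + 1) x‖ ≤ C * r ^ (k + 1)) (hs : (‖s‖ + m) * r ≤ 1) :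
    ‖newtonCurve f m x (s + 1) - newtonCurve f m x s‖ ≤ m * (C * r) := by
  rw [newtonCurve_add_one_sub, ← nsmul_eq_mul]
  refine (norm_sum_le _ _).trans
    ((Finset.sum_le_card_nsmul _ _ _ fun k hk => ?_).trans_eq (by rw [Finset.card_range]))
  have hkm : (k : ℝ) ≤ m := mod_cast (Finset.mem_range.1 hk).le
  rw [norm_smul]
  calc ‖(binomialPoly ℂ k).eval s‖ * ‖finDiff f (k + 1) x‖
      ≤ (‖s‖ + k) ^ k * (C * r ^ (k + 1)) :=
        mul_le_mul (norm_eval_binomialPoly_le_pow k s) (hf k (Finset.mem_range.1 hk))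
          (norm_nonneg _) (by positivity)
    _ ≤ (‖s‖ + m) ^ k * (C * r ^ (k + 1)) := by gcongr
    _ = C * r * ((‖s‖ + m) * r) ^ k := by rw [mul_pow]; ring
    _ ≤ C * r := mul_le_of_le_one_right (by positivity) (pow_le_one₀ (by positivity) hs)

theorem hasDerivAt_newtonCurve (f : E → E) (m : ℕ) (x : E) (s : ℂ) :
    HasDerivAt (newtonCurve f m x) (newtonVelocity f m x s) s :=
  HasDerivAt.fun_sum fun _ _ => (Polynomial.hasDerivAt _ s).smul_const _

end Norm

namespace NearIdentityFamily

variable {E : Type*} [NormedAddCommGroup E] [NormedSpace ℂ E] {ρ : E → ℝ} {δ ε : ℝ}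
  {F : ℂ → E → E} {m : ℕ} {x : E} {μ s : ℂ}

theorem gauge_newtonCurve_add_lt (h : NearIdentityFamily ρ δ ε F) {C η : ℝ} (hC : 0 ≤ C)
    (hF : ∀ k < m, ‖finDiff (F μ) (k + 1) x‖ ≤ C * ‖μ‖ ^ (k + 1)) (hη : η ≤ 1)
    (hroom : ρ x + m * (C * η) + 2 * ‖μ‖ * ε < δ) (hs : (‖s‖ + m) * ‖μ‖ ≤ η) :
    ρ (newtonCurve (F μ) m x s) + 2 * ‖μ‖ * ε < δ := by
  have hcurve := norm_newtonCurve_sub_le hC (norm_nonneg μ) hF (hs.trans hη)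
  have hmono : m * (C * ((‖s‖ + m) * ‖μ‖)) ≤ m * (C * η) := by gcongr
  linarith [h.gauge_le (newtonCurve (F μ) m x s) x]

theorem norm_newtonCurve_add_one_sub_apply_le (h : NearIdentityFamily ρ δ ε F) {C η : ℝ}
    (hC : 0 ≤ C) (hF : ∀ k < m, ‖finDiff (F μ) (k + 1) x‖ ≤ C * ‖μ‖ ^ (k + 1)) (hη : η ≤ 1)
    (hroom : ρ x + m * (C * η) + 2 * ‖μ‖ * ε < δ) (hs : (‖s‖ + m) * ‖μ‖ ≤ η) :
    ‖newtonCurve (F μ) m x (s + 1) - F μ (newtonCurve (F μ) m x s)‖ ≤ (m * C + ε) * ‖μ‖ := by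
  have hstep := norm_newtonCurve_add_one_sub_le hC (norm_nonneg μ) hF (hs.trans hη)
  have happly := h.norm_sub_le μ _ (h.gauge_newtonCurve_add_lt hC hF hη hroom hs)
  rw [← sub_sub_sub_cancel_right _ _ (newtonCurve (F μ) m x s)]
  linarith [_root_.norm_sub_le (newtonCurve (F μ) m x (s + 1) - newtonCurve (F μ) m x s)
    (F μ (newtonCurve (F μ) m x s) - newtonCurve (F μ) m x s)]

theorem differentiableAt_newtonCurve_add_one_sub_apply (h : NearIdentityFamily ρ δ ε F)
    (hs : ρ (newtonCurve (F μ) m x s) + 2 * ‖μ‖ * ε < δ) :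
    DifferentiableAt ℂ
      (fun s => newtonCurve (F μ) m x (s + 1) - F μ (newtonCurve (F μ) m x s)) s := by
  have hcurve := fun s => (hasDerivAt_newtonCurve (F μ) m x s).differentiableAt
  have happly := (h.analyticAt μ _ hs).differentiableAt.fun_comp' s
    (f := fun s => (μ, newtonCurve (F μ) m x s)) ((differentiableAt_const μ).prodMk (hcurve s))
  exact (hcurve (s + 1)).hasDerivAt.comp_add_const s 1 |>.differentiableAt.sub happly

-- As a function of `s`, the step error of the Newton curve vanishes at `0, …, m - 1`; on a disc of
-- radius of order `1 / ‖μ‖` it is `O(‖μ‖)`, so it is `O(‖μ‖ ^ (m + 1))` for bounded `s`.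
theorem norm_newtonCurve_add_one_sub_apply_le_pow [CompleteSpace E]
    (h : NearIdentityFamily ρ δ ε F) {C η : ℝ}
    (hC : 0 ≤ C) (hF : ∀ k < m, ‖finDiff (F μ) (k + 1) x‖ ≤ C * ‖μ‖ ^ (k + 1)) (hη : η ≤ 1)
    (hroom : ρ x + m * (C * η) + 2 * ‖μ‖ * ε < δ) (hs : (‖s‖ + 2 * m) * ‖μ‖ < η / 2) :
    ‖newtonCurve (F μ) m x (s + 1) - F μ (newtonCurve (F μ) m x s)‖ ≤
      (m * C + ε) * ‖μ‖ * ((‖s‖ + m) * (4 / η) * ‖μ‖) ^ m := by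
  have hε := h.pos
  have hη₀ : 0 < η / 2 := lt_of_le_of_lt (by positivity) hs
  rcases eq_or_ne μ 0 with rfl | hμ
  · have hzero := h.norm_newtonCurve_add_one_sub_apply_le (s := s) hC hF hη hroom
      (by rw [norm_zero, mul_zero]; linarith)
    simpa only [norm_zero, mul_zero, zero_mul] using hzero
  have hμ₀ : 0 < ‖μ‖ := norm_pos_iff.2 hμ
  have hmμ : (m : ℝ) * ‖μ‖ ≤ η / 4 := by nlinarith [mul_nonneg (norm_nonneg s) hμ₀.le]
  have hsmall : ∀ σ ∈ Metric.ball (0 : ℂ) (η / 2 / ‖μ‖), (‖σ‖ + m) * ‖μ‖ ≤ η := by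
    intro σ hσ
    rw [mem_ball_zero_iff, lt_div_iff₀ hμ₀] at hσ
    linarith
  have hnodes : η / 4 / ‖μ‖ ≤ η / 2 / ‖μ‖ - m := by
    rw [le_sub_iff_add_le, div_add' _ _ _ hμ₀.ne', div_le_div_iff_of_pos_right hμ₀]
    linarith
  calc ‖newtonCurve (F μ) m x (s + 1) - F μ (newtonCurve (F μ) m x s)‖
      ≤ (m * C + ε) * ‖μ‖ * ((‖s‖ + m) / (η / 2 / ‖μ‖ - m)) ^ m := by
        refine norm_le_of_zeros_at_natCast (fun σ hσ => ?_)
          (fun σ hσ => h.norm_newtonCurve_add_one_sub_apply_le hC hF hη hroom (hsmall σ hσ))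
          (fun j hj => ?_) ((lt_div_iff₀ hμ₀).2 hs)
        · exact (h.differentiableAt_newtonCurve_add_one_sub_apply
            (h.gauge_newtonCurve_add_lt hC hF hη hroom (hsmall σ hσ))).differentiableWithinAt
        · rw [← Nat.cast_add_one, newtonCurve_natCast _ _ _ hj, newtonCurve_natCast _ _ _ hj.le,
            Function.iterate_succ_apply', sub_self]
    _ ≤ (m * C + ε) * ‖μ‖ * ((‖s‖ + m) / (η / 4 / ‖μ‖)) ^ m := by
        have hpos : 0 < η / 4 / ‖μ‖ := div_pos (by linarith) hμ₀
        gcongr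
        exact div_nonneg (by positivity) (hpos.le.trans hnodes)
    _ = (m * C + ε) * ‖μ‖ * ((‖s‖ + m) * (4 / η) * ‖μ‖) ^ m := by
        congr 2
        field_simp

theorem differentiableAt_finDiff_comp (h : NearIdentityFamily ρ δ ε F) {k : ℕ} (hkm : k ≤ m)
    {y : ℂ → E} (hy : DifferentiableAt ℂ y μ) (hyμ : ρ (y μ) + (m + 1) * ‖μ‖ * ε < δ) :
    DifferentiableAt ℂ (fun μ => finDiff (F μ) k (y μ)) μ := by
  have hkm' : (k : ℝ) ≤ m := mod_cast hkm
  have hε := h.pos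
  have han := h.analyticAt_finDiff k (μ := μ) (x := y μ) (lt_of_le_of_lt (by gcongr) hyμ)
  exact han.differentiableAt.fun_comp' μ (f := fun μ => (μ, y μ)) (differentiableAt_id.prodMk hy)

theorem differentiableAt_newtonCurve (h : NearIdentityFamily ρ δ ε F) (s : ℂ)
    (hx : ρ x + (m + 1) * ‖μ‖ * ε < δ) :
    DifferentiableAt ℂ (fun μ => newtonCurve (F μ) m x s) μ :=
  DifferentiableAt.fun_sum fun _ hk => (h.differentiableAt_finDiff_comp
    (Finset.mem_range_succ_iff.1 hk) (differentiableAt_const x) hx).const_smul _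

theorem differentiableAt_newtonVelocity (h : NearIdentityFamily ρ δ ε F) (s : ℂ)
    (hx : ρ x + (m + 1) * ‖μ‖ * ε < δ) :
    DifferentiableAt ℂ (fun μ => newtonVelocity (F μ) m x s) μ :=
  DifferentiableAt.fun_sum fun _ hk => (h.differentiableAt_finDiff_comp
    (Finset.mem_range_succ_iff.1 hk) (differentiableAt_const x) hx).const_smul _

theorem differentiableAt_newtonField_comp (h : NearIdentityFamily ρ δ ε F) {y : ℂ → E}
    (hy : DifferentiableAt ℂ y μ) (hyμ : ρ (y μ) + (m + 1) * ‖μ‖ * ε < δ) :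
    DifferentiableAt ℂ (fun μ => newtonField (F μ) m (y μ)) μ := by
  simp_rw [newtonField_eq_sum]
  exact DifferentiableAt.fun_sum fun k hk => (h.differentiableAt_finDiff_comp
    (Finset.mem_range.1 hk) hy hyμ).const_smul _

theorem tendsto_iterate (h : NearIdentityFamily ρ δ ε F) (n : ℕ) (hx : ρ x < δ) {y : ℂ → E}
    (hy : Tendsto y (𝓝 0) (𝓝 x)) : Tendsto (fun μ => (F μ)^[n] (y μ)) (𝓝 0) (𝓝 x) := by
  have hcont := (h.analyticAt_iterate n (μ := 0) (x := x) (by simpa using hx)).continuousAt.tendsto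
  have hfix : (F 0)^[n] x = x := by
    simpa [sub_eq_zero] using h.norm_iterate_sub_le n (μ := 0) (x := x) (by simpa using hx)
  simp only [hfix] at hcont
  exact hcont.comp (tendsto_id.prodMk_nhds hy)

variable [CompleteSpace E]

theorem exists_eventually_norm_finDiff_le (h : NearIdentityFamily ρ δ ε F) (m : ℕ) (hx : ρ x < δ) :
    ∃ C, 0 ≤ C ∧ ∀ᶠ μ in 𝓝 0, ∀ k < m, ‖finDiff (F μ) (k + 1) x‖ ≤ C * ‖μ‖ ^ (k + 1) := by
  choose C hC₀ hC using fun k => (h.isBigO_finDiff_const (k + 1) hx).exists_nonneg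
  refine ⟨∑ k ∈ Finset.range m, C k, Finset.sum_nonneg fun k _ => hC₀ k, ?_⟩
  have hbound := (Filter.eventually_all_finset (Finset.range m)).2 fun k _ => (hC k).bound
  filter_upwards [hbound] with μ hμ k hk
  rw [← Finset.mem_range] at hk
  rw [← norm_pow]
  refine (hμ k hk).trans ?_
  gcongr
  exact Finset.single_le_sum (fun k _ => hC₀ k) hk

theorem isBigO_newtonCurve_add_one_sub_apply (h : NearIdentityFamily ρ δ ε F) (m : ℕ)
    (hx : ρ x < δ) (s : ℂ) :
    (fun μ => newtonCurve (F μ) m x (s + 1) - F μ (newtonCurve (F μ) m x s)) =O[𝓝 0]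
      fun μ => μ ^ (m + 1) := by
  obtain ⟨C, hC, hF⟩ := h.exists_eventually_norm_finDiff_le m hx
  have hsmall : ∀ᶠ η : ℝ in 𝓝 0, η < 1 ∧ ρ x + m * (C * η) < δ :=
    (eventually_lt_nhds one_pos).and
      (ContinuousAt.eventually_lt (by fun_prop) continuousAt_const (by simpa))
  obtain ⟨η, ⟨hη, hηδ⟩, hη₀⟩ :=
    ((hsmall.filter_mono nhdsWithin_le_nhds).and (self_mem_nhdsWithin (s := Set.Ioi 0))).exists
  have hμ : ∀ᶠ μ : ℂ in 𝓝 0,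
      ρ x + m * (C * η) + 2 * ‖μ‖ * ε < δ ∧ (‖s‖ + 2 * m) * ‖μ‖ < η / 2 := by
    refine .and ?_ ?_ <;>
      exact ContinuousAt.eventually_lt (by fun_prop) continuousAt_const (by simpa)
  refine IsBigO.of_bound ((m * C + ε) * ((‖s‖ + m) * (4 / η)) ^ m) ?_
  filter_upwards [hF, hμ] with μ hFμ ⟨hroom, hsμ⟩
  refine (h.norm_newtonCurve_add_one_sub_apply_le_pow hC hFμ hη.le hroom hsμ).trans_eq ?_
  rw [norm_pow, mul_pow _ ‖μ‖, pow_succ]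
  ring

theorem tendsto_newtonCurve (h : NearIdentityFamily ρ δ ε F) (m : ℕ) (hx : ρ x < δ) (s : ℂ) :
    Tendsto (fun μ => newtonCurve (F μ) m x s) (𝓝 0) (𝓝 x) := by
  have hterm (k : ℕ) : Tendsto (fun μ => finDiff (F μ) (k + 1) x) (𝓝 0) (𝓝 0) :=
    (h.isBigO_finDiff_const (k + 1) hx).trans_tendsto
      (Continuous.tendsto' (by fun_prop) 0 0 (zero_pow k.succ_ne_zero))
  simp_rw [newtonCurve_eq_add_sum]
  simpa using (tendsto_finsetSum (Finset.range m)
    fun k _ => (hterm k).const_smul ((binomialPoly ℂ (k + 1)).eval s)).const_add x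

theorem isBigO_newtonCurve_add_natCast_sub_iterate (h : NearIdentityFamily ρ δ ε F) (m : ℕ)
    (hx : ρ x < δ) (s : ℂ) (n : ℕ) :
    (fun μ => newtonCurve (F μ) m x (s + n) - (F μ)^[n] (newtonCurve (F μ) m x s)) =O[𝓝 0]
      fun μ => μ ^ (m + 1) := by
  induction n with
  | zero => simpa using isBigO_zero _ _
  | succ n ih =>
    have hF := (h.analyticAt 0 x (by simpa using hx)).hasStrictFDerivAt.isBigO_sub
    have hpair := (tendsto_id.prodMk_nhds (h.tendsto_newtonCurve m hx (s + n))).prodMk_nhds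
      (tendsto_id.prodMk_nhds (h.tendsto_iterate n hx (h.tendsto_newtonCurve m hx s)))
    have himage : (fun μ => F μ (newtonCurve (F μ) m x (s + n)) -
        F μ ((F μ)^[n] (newtonCurve (F μ) m x s))) =O[𝓝 0] fun μ => μ ^ (m + 1) := by
      refine (hF.comp_tendsto hpair).trans (IsBigO.trans (isBigO_of_le _ fun μ => ?_) ih)
      simp [Prod.norm_def]
    refine ((h.isBigO_newtonCurve_add_one_sub_apply m hx (s + n)).add himage).congr_left
      fun μ => ?_
    rw [Function.iterate_succ_apply', Nat.cast_succ, ← add_assoc, sub_add_sub_cancel]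

theorem isBigO_newtonVelocity_sub_newtonField (h : NearIdentityFamily ρ δ ε F) (m : ℕ)
    (hx : ρ x < δ) (s : ℂ) :
    (fun μ => newtonVelocity (F μ) m x s - newtonField (F μ) m (newtonCurve (F μ) m x s))
      =O[𝓝 0] fun μ => μ ^ (m + 1) := by
  simp_rw [newtonVelocity_sub_newtonField, newtonDeriv_eq_sum]
  exact IsBigO.fun_sum fun n _ =>
    (h.isBigO_newtonCurve_add_natCast_sub_iterate m hx s n).const_smul_left _

theorem norm_finDiff_succ_le_of_gauge_le (h : NearIdentityFamily ρ δ ε F) {r : ℝ}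
    (hr : (m + 1) * r * ε ≤ δ / 4) {k : ℕ} (hk : k < m) (hx : ρ x ≤ δ / 2) (hμ : ‖μ‖ < 2 * r) :
    ‖finDiff (F μ) (k + 1) x‖ ≤ ‖μ‖ * ε * (‖μ‖ / r) ^ k := by
  have hkm : (k : ℝ) + 1 ≤ m := mod_cast hk
  have hr₀ : 0 < r := by linarith [norm_nonneg μ]
  have hε := h.pos
  have hroom : (k + 1 + 1) * r * ε ≤ (m + 1) * r * ε := by gcongr
  have hbound := h.norm_finDiff_succ_le k (μ := μ) (x := x) (R := 2 * r) (by linarith) hμ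
  rwa [mul_div_mul_left _ _ two_ne_zero] at hbound

theorem norm_finDiff_succ_le_of_norm_le (h : NearIdentityFamily ρ δ ε F) {r : ℝ} (hr₀ : 0 < r)
    (hr : (m + 1) * r * ε ≤ δ / 4) (hx : ρ x ≤ δ / 2) (hμ : ‖μ‖ ≤ r) :
    ∀ k < m, ‖finDiff (F μ) (k + 1) x‖ ≤ r * ε := by
  intro k hk
  have hε := h.pos
  refine (h.norm_finDiff_succ_le_of_gauge_le hr hk hx (by linarith)).trans ?_
  refine (mul_le_of_le_one_right (by positivity) (pow_le_one₀ (by positivity) ?_)).trans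
    (by gcongr)
  exact (div_le_one hr₀).2 hμ

theorem gauge_newtonCurve_le_half (h : NearIdentityFamily ρ δ ε F) {r : ℝ} (hr₀ : 0 < r)
    (hr : (m + 1) * r * ε ≤ δ / 4) (hx : ρ x ≤ 0) (hμ : ‖μ‖ ≤ r) {t : ℝ} (ht₀ : 0 ≤ t)
    (ht₁ : t ≤ 1) : ρ (newtonCurve (F μ) m x t) ≤ δ / 2 := by
  have hε := h.pos
  have hδ : 0 < δ / 4 := lt_of_lt_of_le (by positivity) hr
  have hcurve := norm_newtonCurve_sub_le_harmonic
    (h.norm_finDiff_succ_le_of_norm_le (x := x) hr₀ hr (by linarith) hμ) ht₀ ht₁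
  have hharmonic : harmonic m * (r * ε) ≤ m * (r * ε) := by
    gcongr
    exact harmonic_le_natCast m
  have hrε : 0 < r * ε := by positivity
  linarith [h.gauge_le (newtonCurve (F μ) m x t) x]

theorem norm_newtonVelocity_sub_newtonField_le (h : NearIdentityFamily ρ δ ε F) {r : ℝ}
    (hr : (m + 1) * r * ε ≤ δ / 4) (hx : ρ x ≤ 0) (hμ : ‖μ‖ < r) {t : ℝ} (ht₀ : 0 ≤ t)
    (ht₁ : t ≤ 1) :
    ‖newtonVelocity (F μ) m x t - newtonField (F μ) m (newtonCurve (F μ) m x t)‖ ≤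
      2 * harmonic m * (r * ε) * (‖μ‖ / r) ^ (m + 1) := by
  have hr₀ : 0 < r := (norm_nonneg μ).trans_lt hμ
  have hε := h.pos
  have hδ : 0 < δ / 4 := lt_of_lt_of_le (by positivity) hr
  have hroom {z : ℂ} (hz : z ∈ Metric.ball 0 r) {y : E} (hy : ρ y ≤ δ / 2) :
      ρ y + (m + 1) * ‖z‖ * ε < δ := by
    rw [mem_ball_zero_iff] at hz
    have hlt : (m + 1) * ‖z‖ * ε ≤ (m + 1) * r * ε := by gcongr
    linarith
  have hcurve {z : ℂ} (hz : z ∈ Metric.ball 0 r) : ρ (newtonCurve (F z) m x t) ≤ δ / 2 :=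
    h.gauge_newtonCurve_le_half hr₀ hr hx (mem_ball_zero_iff.1 hz).le ht₀ ht₁
  have hfinDiff {z : ℂ} (hz : z ∈ Metric.ball 0 r) {y : E} (hy : ρ y ≤ δ / 2) :=
    h.norm_finDiff_succ_le_of_norm_le hr₀ hr hy (mem_ball_zero_iff.1 hz).le
  refine norm_le_mul_div_pow_of_isBigO (fun z hz => ?_) (fun z hz => ?_)
    (h.isBigO_newtonVelocity_sub_newtonField m (by linarith) t) hμ
  · exact ((h.differentiableAt_newtonVelocity t (hroom hz (by linarith))).sub
      (h.differentiableAt_newtonField_comp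
        (h.differentiableAt_newtonCurve t (hroom hz (by linarith)))
        (hroom hz (hcurve hz)))).differentiableWithinAt
  · refine (_root_.norm_sub_le _ _).trans ?_
    linarith [norm_newtonVelocity_le_harmonic (hfinDiff hz (y := x) (by linarith)) ht₀ ht₁,
      norm_newtonField_le (hfinDiff hz (hcurve hz))]

end NearIdentityFamily

end NewtonCurves

section LeibnizDefect

theorem fwdDiff_iterate_succ_sub_const {E : Type*} [AddCommGroup E] (a : ℕ → E) (c : E) (k : ℕ) :
    (fwdDiff 1)^[k + 1] (fun n => a n - c) = (fwdDiff 1)^[k + 1] a := by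
  have hstep : fwdDiff 1 (fun n => a n - c) = fwdDiff 1 a :=
    funext fun n => sub_sub_sub_cancel_right _ _ c
  rw [Function.iterate_succ_apply, Function.iterate_succ_apply, hstep]

section Partial

variable {E G : Type*} [NormedAddCommGroup E] [NormedSpace ℂ E] [NormedAddCommGroup G]
  [NormedSpace ℂ G] {g : ℂ × E → G} {μ : ℂ} {x : E}

theorem fderiv_prodMk_right_apply (hg : DifferentiableAt ℂ g (μ, x)) (v : E) :
    fderiv ℂ (fun y => g (μ, y)) x v = fderiv ℂ g (μ, x) (0, v) := by
  have hcomp : HasFDerivAt (fun y => g (μ, y)) _ x :=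
    hg.hasFDerivAt.comp x (hasFDerivAt_prodMk_right (𝕜 := ℂ) μ x)
  rw [hcomp.fderiv]
  rfl

theorem differentiableAt_fderiv_prodMk_right_apply [CompleteSpace G] (hg : AnalyticAt ℂ g (μ, x))
    (v : E) : DifferentiableAt ℂ (fun ν => fderiv ℂ (fun y => g (ν, y)) x v) μ := by
  have hpair : DifferentiableAt ℂ (fun ν : ℂ => (ν, x)) μ :=
    differentiableAt_id.prodMk (differentiableAt_const x)
  have hjoint : DifferentiableAt ℂ (fun ν => fderiv ℂ g (ν, x) (0, v)) μ :=
    (hg.fderiv.differentiableAt.fun_comp' μ hpair).clm_apply (differentiableAt_const _)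
  refine hjoint.congr_of_eventuallyEq ?_
  filter_upwards [hpair.continuousAt.eventually hg.eventually_analyticAt] with ν hν
  exact fderiv_prodMk_right_apply hν.differentiableAt v

end Partial

theorem isBigO_pow_mul_pow {k l m : ℕ} (h : m ≤ k + l) :
    (fun μ : ℂ => μ ^ k * μ ^ l) =O[𝓝 0] fun μ => μ ^ m := by
  refine IsBigO.of_bound 1 ?_
  filter_upwards [Metric.ball_mem_nhds (0 : ℂ) one_pos] with μ hμ
  rw [mem_ball_zero_iff] at hμ
  rw [← pow_add, norm_pow, norm_pow, one_mul]
  exact pow_le_pow_of_le_one (norm_nonneg μ) hμ.le h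

theorem isBigO_newtonDeriv_bilin {E G H : Type*} [NormedAddCommGroup E] [NormedSpace ℂ E]
    [NormedAddCommGroup G] [NormedSpace ℂ G] [NormedAddCommGroup H] [NormedSpace ℂ H]
    (B : E →L[ℂ] G →L[ℂ] H) (m : ℕ) {a : ℂ → ℕ → E} {b : ℂ → ℕ → G} (ha₀ : ∀ μ, a μ 0 = 0)
    (hb₀ : ∀ μ, b μ 0 = 0)
    (ha : ∀ k, (fun μ => (fwdDiff 1)^[k + 1] (a μ) 0) =O[𝓝 0] fun μ => μ ^ (k + 1))
    (hb : ∀ k, (fun μ => (fwdDiff 1)^[k + 1] (b μ) 0) =O[𝓝 0] fun μ => μ ^ (k + 1)) :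
    (fun μ => newtonDeriv ℂ m fun n => B (a μ n) (b μ n)) =O[𝓝 0] fun μ => μ ^ (m + 1) := by
  have hexpand (μ : ℂ) := newtonDeriv_bilin B.toLinearMap₁₂ m (a μ) (b μ)
  simp only [ContinuousLinearMap.toLinearMap₁₂_apply_apply_apply] at hexpand
  simp_rw [hexpand]
  refine IsBigO.fun_sum fun k _ => IsBigO.fun_sum fun l _ => ?_
  rcases k with _ | k
  · simpa [ha₀] using isBigO_zero _ _
  rcases l with _ | l
  · simpa [hb₀] using isBigO_zero _ _
  by_cases hkl : k + 1 + (l + 1) ≤ m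
  · simpa [newtonDeriv_choose_mul_choose hkl] using isBigO_zero _ _
  · have hpair : (fun μ => B ((fwdDiff 1)^[k + 1] (a μ) 0) ((fwdDiff 1)^[l + 1] (b μ) 0))
        =O[𝓝 0] fun μ => μ ^ (k + 1) * μ ^ (l + 1) :=
      (IsBigO.of_bound ‖B‖ (Eventually.of_forall fun μ => by
        simpa only [norm_mul, norm_norm, mul_assoc] using B.le_opNorm₂ _ _)).trans
          ((ha k).norm_left.mul (hb l).norm_left)
    exact (hpair.trans (isBigO_pow_mul_pow (by omega))).const_smul_left _

section Definition

variable {E : Type*} [NormedAddCommGroup E] [NormedSpace ℂ E]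

/-- The failure of the bilinear form `B` to be interpolated along an orbit of `f` and its
tangent vectors: `newtonDeriv` of the product of the two increments, which would vanish if
`newtonDeriv` obeyed the Leibniz rule. -/
noncomputable def leibnizDefect (B : E →L[ℂ] E →L[ℂ] ℂ) (f : E → E) (m : ℕ) (x v : E) : ℂ :=
  newtonDeriv ℂ m fun n => B (f^[n] x - x) (fderiv ℂ f^[n] x v - v)

theorem fwdDiff_iterate_fderiv_iterate {f : E → E} {k : ℕ} {x : E}
    (hf : ∀ n ≤ k, DifferentiableAt ℂ f^[n] x) (v : E) :
    (fwdDiff 1)^[k] (fun n => fderiv ℂ f^[n] x v) 0 = fderiv ℂ (finDiff f k) x v := by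
  have hsum : finDiff f k = fun y => ∑ n ∈ Finset.range (k + 1),
      ((-1 : ℂ) ^ (k - n) * (k.choose n : ℂ)) • f^[n] y :=
    funext fun y => by
      rw [finDiff_eq_fwdDiff_iterate, fwdDiff_iterate_zero_eq_sum (𝕜 := ℂ) _ le_rfl]
  have hf' : ∀ n ∈ Finset.range (k + 1), DifferentiableAt ℂ f^[n] x :=
    fun n hn => hf n (Finset.mem_range_succ_iff.1 hn)
  rw [hsum, fderiv_fun_sum fun n hn => (hf' n hn).fun_const_smul _, sum_apply,
    fwdDiff_iterate_zero_eq_sum (𝕜 := ℂ) _ le_rfl]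
  exact Finset.sum_congr rfl fun n hn => by rw [fderiv_fun_const_smul (hf' n hn)]; rfl

end Definition

namespace NearIdentityFamily

variable {E : Type*} [NormedAddCommGroup E] [NormedSpace ℂ E] {ρ : E → ℝ} {δ ε : ℝ}
  {F : ℂ → E → E} {m : ℕ} {x : E} {μ : ℂ}

theorem differentiableAt_iterate (h : NearIdentityFamily ρ δ ε F) (n : ℕ)
    (hx : ρ x + (n + 1) * ‖μ‖ * ε < δ) : DifferentiableAt ℂ (F μ)^[n] x :=
  (h.analyticAt_iterate n hx).differentiableAt.fun_comp' x (f := fun y => (μ, y))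
    ((differentiableAt_const μ).prodMk differentiableAt_id)

theorem norm_fderiv_iterate_apply_sub_le (h : NearIdentityFamily ρ δ ε F) (n : ℕ) {r : ℝ}
    (hr : 0 < r) (hx : ρ x + r + (n + 1) * ‖μ‖ * ε ≤ δ) (v : E) :
    ‖fderiv ℂ (F μ)^[n] x v - v‖ ≤ n * ‖μ‖ * ε / r * ‖v‖ := by
  have hroom : ∀ y ∈ Metric.ball x r, ρ y + (n + 1) * ‖μ‖ * ε < δ := by
    intro y hy
    rw [mem_ball_iff_norm] at hy
    linarith [h.gauge_le y x]
  have hcauchy := norm_fderiv_le_of_forall_mem_ball (f := fun y => (F μ)^[n] y - y) hr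
    (fun y hy => ((h.differentiableAt_iterate n (hroom y hy)).sub
      differentiableAt_id).differentiableWithinAt)
    (fun y hy => h.norm_iterate_sub_le n (hroom y hy))
  rw [fderiv_fun_sub (h.differentiableAt_iterate n (hroom x (Metric.mem_ball_self hr)))
    differentiableAt_fun_id, fderiv_fun_id] at hcauchy
  exact ContinuousLinearMap.le_of_opNorm_le _ hcauchy v

theorem norm_leibnizDefect_le_of_norm_le (h : NearIdentityFamily ρ δ ε F)
    (B : E →L[ℂ] E →L[ℂ] ℂ) {R r : ℝ} (hr : 0 < r) (hx : ρ x + r + (m + 1) * R * ε ≤ δ)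
    (hμ : ‖μ‖ ≤ R) (v : E) :
    ‖leibnizDefect B (F μ) m x v‖ ≤ m * 2 ^ m / 2 * (‖B‖ * ((R * ε) ^ 2 / r) * ‖v‖) := by
  refine norm_newtonDeriv_le_of_norm_le_sq fun n hn => ?_
  have hnm : (n : ℝ) ≤ m := mod_cast hn
  have hε := h.pos
  have : 0 ≤ R := (norm_nonneg μ).trans hμ
  have hroom : ρ x + r + (n + 1) * ‖μ‖ * ε ≤ δ := le_trans (by gcongr) hx
  have horbit := h.norm_iterate_sub_le n (μ := μ) (x := x) (by linarith)
  have htangent := h.norm_fderiv_iterate_apply_sub_le n hr hroom v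
  calc ‖B ((F μ)^[n] x - x) (fderiv ℂ (F μ)^[n] x v - v)‖
      ≤ ‖B‖ * (n * R * ε) * (n * R * ε / r * ‖v‖) :=
        B.le_of_opNorm₂_le_of_le le_rfl (horbit.trans (by gcongr)) (htangent.trans (by gcongr))
    _ = n ^ 2 * (‖B‖ * ((R * ε) ^ 2 / r) * ‖v‖) := by ring

variable [CompleteSpace E]

theorem isBigO_fderiv_finDiff (h : NearIdentityFamily ρ δ ε F) (k : ℕ) (hx : ρ x < δ) (v : E) :
    (fun μ => fderiv ℂ (finDiff (F μ) k) x v) =O[𝓝 0] fun μ => μ ^ k := by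
  obtain ⟨C, r, -, hr, hbound⟩ :=
    exists_bound_of_isBigO_fst_pow (h.eventually_analyticAt_finDiff k hx) (h.isBigO_finDiff k hx)
  refine IsBigO.of_bound (C / r * ‖v‖) ?_
  filter_upwards [Metric.ball_mem_nhds 0 hr] with μ hμ
  rw [mem_ball_zero_iff] at hμ
  have hcauchy := norm_fderiv_le_of_forall_mem_ball hr
    (fun y hy => (hbound μ hμ y hy).1.differentiableWithinAt) (fun y hy => (hbound μ hμ y hy).2)
  refine (ContinuousLinearMap.le_of_opNorm_le _ hcauchy v).trans_eq ?_
  rw [norm_pow]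
  ring

theorem isBigO_leibnizDefect (h : NearIdentityFamily ρ δ ε F) (B : E →L[ℂ] E →L[ℂ] ℂ) (m : ℕ)
    (hx : ρ x < δ) (v : E) :
    (fun μ => leibnizDefect B (F μ) m x v) =O[𝓝 0] fun μ => μ ^ (m + 1) := by
  refine isBigO_newtonDeriv_bilin B m (a := fun μ n => (F μ)^[n] x - x)
    (b := fun μ n => fderiv ℂ (F μ)^[n] x v - v) (fun _ => sub_self x) (fun μ => ?_) (fun k => ?_)
    (fun k => ?_)
  · rw [Function.iterate_zero, fderiv_id, ContinuousLinearMap.id_apply, sub_self]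
  · simp_rw [fwdDiff_iterate_succ_sub_const, ← finDiff_eq_fwdDiff_iterate]
    exact h.isBigO_finDiff_const (k + 1) hx
  · simp_rw [fwdDiff_iterate_succ_sub_const]
    refine (h.isBigO_fderiv_finDiff (k + 1) hx v).congr' ?_ .rfl
    have hroom : ∀ᶠ μ : ℂ in 𝓝 0, ρ x + (k + 2) * ‖μ‖ * ε < δ :=
      ContinuousAt.eventually_lt (by fun_prop) continuousAt_const (by simpa)
    filter_upwards [hroom] with μ hμ
    refine (fwdDiff_iterate_fderiv_iterate (fun n hn => h.differentiableAt_iterate n ?_) v).symm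
    have hnk : (n : ℝ) + 1 ≤ k + 2 := by exact_mod_cast Nat.succ_le_succ hn
    have hε := h.pos
    exact lt_of_le_of_lt (by gcongr) hμ

theorem differentiableAt_leibnizDefect (h : NearIdentityFamily ρ δ ε F)
    (B : E →L[ℂ] E →L[ℂ] ℂ) (hx : ρ x + (m + 1) * ‖μ‖ * ε < δ) (v : E) :
    DifferentiableAt ℂ (fun μ => leibnizDefect B (F μ) m x v) μ := by
  simp_rw [leibnizDefect, newtonDeriv_eq_sum]
  refine DifferentiableAt.fun_sum fun n hn => DifferentiableAt.fun_const_smul ?_ _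
  have hnm : (n : ℝ) ≤ m := mod_cast Finset.mem_range_succ_iff.1 hn
  have hε := h.pos
  have han := h.analyticAt_iterate n (μ := μ) (x := x) (lt_of_le_of_lt (by gcongr) hx)
  have horbit : DifferentiableAt ℂ (fun μ => (F μ)^[n] x) μ :=
    han.differentiableAt.fun_comp' μ (f := fun μ => (μ, x))
      (differentiableAt_id.prodMk (differentiableAt_const x))
  have htangent : DifferentiableAt ℂ (fun μ => fderiv ℂ (F μ)^[n] x v) μ :=
    differentiableAt_fderiv_prodMk_right_apply han v
  exact ((B.differentiableAt.fun_comp' μ (horbit.sub_const x)).clm_apply (htangent.sub_const v))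

theorem norm_leibnizDefect_le (h : NearIdentityFamily ρ δ ε F) (B : E →L[ℂ] E →L[ℂ] ℂ)
    {R r : ℝ} (hr : 0 < r) (hx : ρ x + r + (m + 1) * R * ε ≤ δ) (hμ : ‖μ‖ < R) (v : E) :
    ‖leibnizDefect B (F μ) m x v‖ ≤
      m * 2 ^ m / 2 * (‖B‖ * ((R * ε) ^ 2 / r) * ‖v‖) * (‖μ‖ / R) ^ (m + 1) := by
  have hε := h.pos
  have hR : 0 < R := (norm_nonneg μ).trans_lt hμ
  have hroom : 0 < (m + 1) * R * ε := by positivity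
  refine norm_le_mul_div_pow_of_isBigO (fun z hz => ?_)
    (fun z hz => h.norm_leibnizDefect_le_of_norm_le B hr hx (mem_ball_zero_iff.1 hz).le v)
    (h.isBigO_leibnizDefect B m (by linarith) v) hμ
  rw [mem_ball_zero_iff] at hz
  have hz' : (m + 1) * ‖z‖ * ε ≤ (m + 1) * R * ε := by gcongr
  exact (h.differentiableAt_leibnizDefect B (by linarith) v).differentiableWithinAt

end NearIdentityFamily

end LeibnizDefect

section GeneratingFunctions

theorem hasFDerivAt_newtonDeriv {𝕜 E G : Type*} [NontriviallyNormedField 𝕜] [NormedAddCommGroup E]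
    [NormedSpace 𝕜 E] [NormedAddCommGroup G] [NormedSpace 𝕜 G] {m : ℕ} {a : ℕ → E → G}
    {a' : ℕ → E →L[𝕜] G} {x : E} (h : ∀ n ≤ m, HasFDerivAt (a n) (a' n) x) :
    HasFDerivAt (fun y => newtonDeriv 𝕜 m fun n => a n y) (newtonDeriv 𝕜 m a') x := by
  simp_rw [newtonDeriv_eq_sum]
  exact HasFDerivAt.fun_sum fun n hn => (h n (Finset.mem_range_succ_iff.1 hn)).fun_const_smul _

theorem newtonDeriv_clm_apply {E G : Type*} [NormedAddCommGroup E] [NormedSpace ℂ E]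
    [NormedAddCommGroup G] [NormedSpace ℂ G] (m : ℕ) (L : ℕ → E →L[ℂ] G) (v : E) :
    newtonDeriv ℂ m L v = newtonDeriv ℂ m fun n => L n v := by
  simp_rw [newtonDeriv_eq_sum, sum_apply, smul_apply]

theorem norm_dotProduct_le {ι R : Type*} [Fintype ι] [SeminormedRing R] (v w : ι → R) :
    ‖v ⬝ᵥ w‖ ≤ Fintype.card ι * ‖v‖ * ‖w‖ := by
  calc ‖v ⬝ᵥ w‖ ≤ ∑ _i : ι, ‖v‖ * ‖w‖ :=
        norm_sum_le_of_le _ fun i _ => norm_mul_le_of_le (norm_le_pi_norm v i) (norm_le_pi_norm w i)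
    _ = Fintype.card ι * ‖v‖ * ‖w‖ := by simp [mul_assoc]

variable {d : ℕ}

theorem norm_fst_dotProduct_snd_le (x v : CPhase d) : ‖x.1 ⬝ᵥ v.2‖ ≤ d * ‖x‖ * ‖v‖ := by
  refine (norm_dotProduct_le x.1 v.2).trans ?_
  rw [Fintype.card_fin]
  gcongr
  exacts [norm_fst_le x, norm_snd_le v]

theorem fderiv_apply_eq_dotProduct (S : CPhase d → ℂ) (x w : CPhase d) :
    fderiv ℂ S x w = w.1 ⬝ᵥ pGrad d S x + w.2 ⬝ᵥ qGrad d S x := by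
  have hw : w = ∑ i, (w.1 i • ((Pi.single i 1, 0) : CPhase d) +
      w.2 i • ((0, Pi.single i 1) : CPhase d)) := by
    ext j <;> simp [Prod.fst_sum, Prod.snd_sum, Finset.sum_apply, Pi.single_apply]
  conv_lhs => rw [hw]
  simp only [map_sum, map_add, map_smul, Finset.sum_add_distrib]
  rfl

theorem analyticAt_pGrad {S : CPhase d → ℂ} {x : CPhase d} (hS : AnalyticAt ℂ S x) :
    AnalyticAt ℂ (pGrad d S) x :=
  analyticAt_pi_iff.2 fun i =>
    ((ContinuousLinearMap.apply ℂ ℂ ((Pi.single i 1, 0) : CPhase d)).analyticAt _).comp hS.fderiv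

theorem analyticAt_qGrad {S : CPhase d → ℂ} {x : CPhase d} (hS : AnalyticAt ℂ S x) :
    AnalyticAt ℂ (qGrad d S) x :=
  analyticAt_pi_iff.2 fun i =>
    ((ContinuousLinearMap.apply ℂ ℂ ((0, Pi.single i 1) : CPhase d)).analyticAt _).comp hS.fderiv

theorem analyticAt_hamVF {H : CPhase d → ℂ} {x : CPhase d} (hH : AnalyticAt ℂ H x) :
    AnalyticAt ℂ (hamVF d H) x :=
  (analyticAt_qGrad hH).neg.prod (analyticAt_pGrad hH)

/-- The bilinear form `(x, v) ↦ x.1 ⬝ᵥ v.2`. At fixed `x` it is the Liouville one-form `P dQ`,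
and its antisymmetrization is the symplectic form. -/
noncomputable def liouville (d : ℕ) : CPhase d →L[ℂ] CPhase d →L[ℂ] ℂ :=
  LinearMap.mkContinuous₂
    ((dotProductBilin ℂ ℂ).compl₁₂ (LinearMap.fst ℂ _ _) (LinearMap.snd ℂ _ _)) d
    norm_fst_dotProduct_snd_le

theorem liouville_apply (x v : CPhase d) : liouville d x v = x.1 ⬝ᵥ v.2 :=
  rfl

theorem norm_liouville_le (d : ℕ) : ‖liouville d‖ ≤ d :=
  LinearMap.mkContinuous₂_norm_le _ d.cast_nonneg _

theorem norm_hamVF_sub_le {H : CPhase d → ℂ} {x X : CPhase d} {M : ℝ} (hM : 0 ≤ M)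
    (h : ∀ v, ‖fderiv ℂ H x v - (liouville d v X - liouville d X v)‖ ≤ M * ‖v‖) :
    ‖hamVF d H x - X‖ ≤ M := by
  refine norm_prod_le_iff.2 ⟨(pi_norm_le_iff_of_nonneg hM).2 fun i => ?_,
    (pi_norm_le_iff_of_nonneg hM).2 fun i => ?_⟩
  · have hcoord : (hamVF d H x - X).1 i = -(fderiv ℂ H x (0, Pi.single i 1) -
        (liouville d (0, Pi.single i 1) X - liouville d X (0, Pi.single i 1))) := by
      simp only [hamVF, Prod.fst_sub, Pi.sub_apply, Pi.neg_apply, qGrad, liouville_apply,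
        zero_dotProduct, dotProduct_single, mul_one]
      ring
    rw [hcoord, norm_neg]
    simpa [Prod.norm_def, Pi.norm_single] using h (0, Pi.single i 1)
  · have hcoord : (hamVF d H x - X).2 i = fderiv ℂ H x (Pi.single i 1, 0) -
        (liouville d (Pi.single i 1, 0) X - liouville d X (Pi.single i 1, 0)) := by
      simp [hamVF, pGrad, liouville_apply]
    simpa [hcoord, Prod.norm_def, Pi.norm_single] using h (Pi.single i 1, 0)

/-- At the point `x`, the analytic map `g` is given implicitly by the generating function
`P ⬝ᵥ q + S (P, q)`. -/
structure GeneratedAt (S : CPhase d → ℂ) (g : CPhase d → CPhase d) (x : CPhase d) : Prop where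
  analyticAt : AnalyticAt ℂ g x
  analyticAt_generator : AnalyticAt ℂ S ((g x).1, x.2)
  step : SemiImplicitStep (pGrad d S) (qGrad d S) 1 x (g x)

/-- The action `P ⬝ᵥ (Q - q) - S (P, q)` of the step `(P, Q) = g (p, q)`. -/
noncomputable def stepAction (S : CPhase d → ℂ) (g : CPhase d → CPhase d) (x : CPhase d) : ℂ :=
  liouville d (g x) (g x - x) - S ((g x).1, x.2)

/-- The action of the orbit segment `x, g x, …, g^[n] x`. -/
noncomputable def orbitAction (S : CPhase d → ℂ) (g : CPhase d → CPhase d) (n : ℕ)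
    (x : CPhase d) : ℂ :=
  ∑ j ∈ Finset.range n, stepAction S g (g^[j] x)

/-- The Hamiltonian interpolating `g` to order `m`: `newtonDeriv` of `p ⬝ᵥ Qₙ` minus the action
along the orbit `(Pₙ, Qₙ)` of `(p, q)`. -/
noncomputable def newtonHamiltonian (S : CPhase d → ℂ) (g : CPhase d → CPhase d) (m : ℕ)
    (x : CPhase d) : ℂ :=
  newtonDeriv ℂ m fun n => liouville d x (g^[n] x) - orbitAction S g n x

variable {S : CPhase d → ℂ} {g : CPhase d → CPhase d} {x : CPhase d} {n m : ℕ}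

theorem orbitAction_zero (S : CPhase d → ℂ) (g : CPhase d → CPhase d) :
    orbitAction S g 0 = fun _ => 0 :=
  rfl

theorem orbitAction_succ (S : CPhase d → ℂ) (g : CPhase d → CPhase d) (n : ℕ) :
    orbitAction S g (n + 1) = fun x => orbitAction S g n x + stepAction S g (g^[n] x) :=
  funext fun _ => Finset.sum_range_succ _ _

namespace GeneratedAt

theorem analyticAt_stepAction (h : GeneratedAt S g x) : AnalyticAt ℂ (stepAction S g) x := by
  have hpair : AnalyticAt ℂ (fun y => ((g y).1, y.2)) x :=
    (analyticAt_fst.fun_comp h.analyticAt).prod analyticAt_snd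
  exact (((liouville d).analyticAt_bilinear _).fun_comp
    (h.analyticAt.prod (h.analyticAt.fun_sub analyticAt_id))).fun_sub
      (AnalyticAt.fun_comp (g := S) h.analyticAt_generator hpair)

-- `d(P ⬝ᵥ (Q - q) - S) = P dQ - p dq`, because `dS = (Q - q) dP + (p - P) dq`.
theorem hasFDerivAt_stepAction (h : GeneratedAt S g x) :
    HasFDerivAt (stepAction S g) ((liouville d (g x)).comp (fderiv ℂ g x) - liouville d x) x := by
  have hg := h.analyticAt.differentiableAt.hasFDerivAt
  have hpair : HasFDerivAt (fun y => ((g y).1, y.2)) _ x := hg.fst.prodMk hasFDerivAt_snd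
  have hform := (liouville d).hasFDerivAt_of_bilinear hg (hg.fun_sub (hasFDerivAt_id x))
  have hgen : HasFDerivAt (fun y => S ((g y).1, y.2)) _ x :=
    h.analyticAt_generator.differentiableAt.hasFDerivAt.comp x hpair
  refine (hform.fun_sub hgen).congr_fderiv (ContinuousLinearMap.ext fun v => ?_)
  have hp : qGrad d S ((g x).1, x.2) = x.1 - (g x).1 := by
    rw [h.step.fst_eq, one_smul, add_sub_cancel_left]
  have hq : pGrad d S ((g x).1, x.2) = (g x).2 - x.2 := by
    rw [h.step.snd_eq, one_smul, add_sub_cancel_left]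
  simp only [ContinuousLinearMap.precompR_apply, ContinuousLinearMap.compL_apply, sub_apply,
    ContinuousLinearMap.comp_id, id_eq, map_sub, add_apply,
    ContinuousLinearMap.comp_apply, ContinuousLinearMap.precompL_apply,
    ContinuousLinearMap.prod_apply, ContinuousLinearMap.coe_fst', ContinuousLinearMap.coe_snd',
    liouville_apply, fderiv_apply_eq_dotProduct, hp, hq, sub_dotProduct, dotProduct_sub,
    dotProduct_comm]
  ring

theorem analyticAt_iterate (h : ∀ j < n, GeneratedAt S g (g^[j] x)) : AnalyticAt ℂ g^[n] x := by
  induction n with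
  | zero => exact analyticAt_id
  | succ n ih =>
    rw [Function.iterate_succ']
    exact (h n n.lt_succ_self).analyticAt.comp (ih fun j hj => h j (by omega))

theorem analyticAt_orbitAction (h : ∀ j < n, GeneratedAt S g (g^[j] x)) :
    AnalyticAt ℂ (orbitAction S g n) x :=
  Finset.analyticAt_fun_sum _ fun j hj =>
    have hj := Finset.mem_range.1 hj
    (h j hj).analyticAt_stepAction.fun_comp (analyticAt_iterate fun i hi => h i (by omega))

theorem hasFDerivAt_orbitAction (h : ∀ j < n, GeneratedAt S g (g^[j] x)) :
    HasFDerivAt (orbitAction S g n)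
      ((liouville d (g^[n] x)).comp (fderiv ℂ g^[n] x) - liouville d x) x := by
  induction n with
  | zero =>
    rw [orbitAction_zero, Function.iterate_zero, fderiv_id, ContinuousLinearMap.comp_id, id,
      sub_self]
    exact hasFDerivAt_const 0 x
  | succ n ih =>
    have hprev : ∀ j < n, GeneratedAt S g (g^[j] x) := fun j hj => h j (by omega)
    have hn := h n n.lt_succ_self
    have hiter := (analyticAt_iterate hprev).differentiableAt
    rw [orbitAction_succ, Function.iterate_succ',
      fderiv_comp x hn.analyticAt.differentiableAt hiter]
    refine ((ih hprev).fun_add (hn.hasFDerivAt_stepAction.comp x hiter.hasFDerivAt)).congr_fderiv ?_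
    ext v <;> simp

theorem analyticAt_newtonHamiltonian (h : ∀ j < m, GeneratedAt S g (g^[j] x)) :
    AnalyticAt ℂ (newtonHamiltonian S g m) x := by
  unfold newtonHamiltonian
  simp_rw [newtonDeriv_eq_sum]
  refine Finset.analyticAt_fun_sum _ fun n hn => analyticAt_const.fun_smul ?_
  have hn := Finset.mem_range_succ_iff.1 hn
  have hprev : ∀ j < n, GeneratedAt S g (g^[j] x) := fun j hj => h j (by omega)
  exact (((liouville d).analyticAt_bilinear _).fun_comp
    (analyticAt_id.prod (analyticAt_iterate hprev))).fun_sub (analyticAt_orbitAction hprev)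

theorem fderiv_newtonHamiltonian_apply (h : ∀ j < m, GeneratedAt S g (g^[j] x)) (v : CPhase d) :
    fderiv ℂ (newtonHamiltonian S g m) x v =
      liouville d v (newtonField g m x) - liouville d (newtonField g m x) v -
        leibnizDefect (liouville d) g m x v := by
  have hterm : ∀ n ≤ m, HasFDerivAt (fun y => liouville d y (g^[n] y) - orbitAction S g n y) _ x :=
    fun n hn =>
      have hprev : ∀ j < n, GeneratedAt S g (g^[j] x) := fun j hj => h j (by omega)
      ((liouville d).hasFDerivAt_of_bilinear (hasFDerivAt_id x)
        (analyticAt_iterate hprev).differentiableAt.hasFDerivAt).fun_sub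
          (hasFDerivAt_orbitAction hprev)
  have hderiv : HasFDerivAt (newtonHamiltonian S g m) _ x := hasFDerivAt_newtonDeriv hterm
  have hvX := map_newtonDeriv (liouville d v).toLinearMap m fun n => g^[n] x
  have hXv := map_newtonDeriv ((liouville d).flip v).toLinearMap m fun n => g^[n] x
  have hconst := newtonDeriv_const (𝕜 := ℂ) m (2 * liouville d x v)
  rw [hderiv.fderiv, newtonDeriv_clm_apply, leibnizDefect, newtonField]
  simp only [ContinuousLinearMap.coe_coe, ContinuousLinearMap.flip_apply] at hvX hXv
  rw [← hvX, ← hXv, ← newtonDeriv_sub, ← newtonDeriv_sub, ← sub_zero (newtonDeriv ℂ m _),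
    ← hconst, ← newtonDeriv_sub]
  refine newtonDeriv_congr fun n _ => ?_
  simp only [id_eq, ContinuousLinearMap.precompR_apply, ContinuousLinearMap.compL_apply, sub_apply,
    add_apply, ContinuousLinearMap.comp_apply, ContinuousLinearMap.precompL_apply,
    ContinuousLinearMap.id_apply, map_sub]
  ring

end GeneratedAt

theorem NearIdentityFamily.norm_hamVF_newtonHamiltonian_sub_le {ρ : CPhase d → ℝ} {δ ε : ℝ}
    {F : ℂ → CPhase d → CPhase d} (h : NearIdentityFamily ρ δ ε F)
    (hS : ∀ j < m, GeneratedAt S (F 1) ((F 1)^[j] x)) {R r : ℝ} (hR : 1 < R) (hr : 0 < r)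
    (hx : ρ x + r + (m + 1) * R * ε ≤ δ) :
    ‖hamVF d (newtonHamiltonian S (F 1) m) x - newtonField (F 1) m x‖ ≤
      m * 2 ^ m / 2 * (d * ((R * ε) ^ 2 / r)) * (1 / R) ^ (m + 1) := by
  have : 0 < R := one_pos.trans hR
  refine norm_hamVF_sub_le (by positivity) fun v => ?_
  have hdefect := h.norm_leibnizDefect_le (liouville d) hr hx (μ := 1) (by rwa [norm_one]) v
  rw [GeneratedAt.fderiv_newtonHamiltonian_apply hS, sub_sub_cancel_left, norm_neg]
  calc ‖leibnizDefect (liouville d) (F 1) m x v‖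
      ≤ m * 2 ^ m / 2 * (d * ((R * ε) ^ 2 / r) * ‖v‖) * (1 / R) ^ (m + 1) := by
        rw [norm_one] at hdefect
        refine hdefect.trans ?_
        gcongr
        exact norm_liouville_le d
    _ = m * 2 ^ m / 2 * (d * ((R * ε) ^ 2 / r)) * (1 / R) ^ (m + 1) * ‖v‖ := by ring

end GeneratingFunctions

section UnitTimeFlows

open scoped NNReal

/-- An integral curve of `V` issuing from `x` stays in `s` for unit time and arrives at `y`. The
derivatives at the times `0` and `1` are two-sided. -/
def FlowsTo {E : Type*} [NormedAddCommGroup E] [NormedSpace ℝ E] (V : E → E) (s : Set E)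
    (x y : E) : Prop :=
  ∃ γ : ℝ → E, γ 0 = x ∧ γ 1 = y ∧
    ∀ t ∈ Set.Icc (0 : ℝ) 1, γ t ∈ s ∧ HasDerivAt γ (V (γ t)) t

variable {E : Type*} [NormedAddCommGroup E] [NormedSpace ℝ E] {V W : E → E} {s u : Set E}
  {x y : E}

theorem FlowsTo.mono (h : FlowsTo V s x y) (hsu : s ⊆ u) (hVW : Set.EqOn V W s) :
    FlowsTo W u x y := by
  obtain ⟨γ, h₀, h₁, hγ⟩ := h
  exact ⟨γ, h₀, h₁, fun t ht => ⟨hsu (hγ t ht).1, hVW (hγ t ht).1 ▸ (hγ t ht).2⟩⟩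

theorem exists_timeOneMap {f : E → E} {C : ℝ}
    (h : ∀ x ∈ u, ∃ y, FlowsTo V s x y ∧ ‖y - f x‖ ≤ C) :
    ∃ Φ : E → E, (∀ x ∈ u, FlowsTo V s x (Φ x)) ∧ ∀ x ∈ u, ‖Φ x - f x‖ ≤ C := by
  choose! Φ hΦ using h
  exact ⟨Φ, fun x hx => (hΦ x hx).1, fun x hx => (hΦ x hx).2⟩

theorem gronwallBound_three_fifths_le {η : ℝ} (hη : 0 ≤ η) :
    gronwallBound 0 (3 / 5) η 1 ≤ 3 / 2 * η := by
  have hexp : Real.exp (3 / 5) ≤ 19 / 10 :=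
    (Real.exp_bound' (by norm_num) (by norm_num) (n := 4) (by norm_num)).trans
      (by norm_num [Finset.sum_range_succ, Nat.factorial])
  rw [gronwallBound_of_K_ne_0 (by norm_num)]
  simp only [mul_one, zero_mul, zero_add]
  nlinarith [mul_le_mul_of_nonneg_left hexp hη]

theorem FlowsTo.norm_sub_le_of_approx {X : E → E} {p p' : ℝ → E} {η η' : ℝ}
    (h : FlowsTo V s x y) (hX : LipschitzOnWith (3 / 5 : ℝ≥0) X s)
    (hVX : ∀ z ∈ s, ‖V z - X z‖ ≤ η) (hp₀ : p 0 = x)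
    (hp : ∀ t ∈ Set.Icc (0 : ℝ) 1, p t ∈ s ∧ HasDerivAt p (p' t) t ∧ ‖p' t - X (p t)‖ ≤ η') :
    ‖y - p 1‖ ≤ 3 / 2 * (η + η') := by
  obtain ⟨γ, rfl, rfl, hγ⟩ := h
  have h₀ : (0 : ℝ) ∈ Set.Icc (0 : ℝ) 1 := by norm_num
  have hIco {t : ℝ} (ht : t ∈ Set.Ico (0 : ℝ) 1) := Set.Ico_subset_Icc_self ht
  have hη : 0 ≤ η + η' := add_nonneg ((norm_nonneg _).trans (hVX _ (hγ 0 h₀).1))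
    ((norm_nonneg _).trans (hp 0 h₀).2.2)
  have hgronwall := dist_le_of_approx_trajectories_ODE_of_mem (v := fun _ => X) (s := fun _ => s)
    (δ := 0) (fun _ _ => hX)
    (fun t ht => (hγ t ht).2.continuousAt.continuousWithinAt)
    (fun t ht => (hγ t (hIco ht)).2.hasDerivWithinAt)
    (fun t ht => by rw [dist_eq_norm]; exact hVX _ (hγ t (hIco ht)).1)
    (fun t ht => (hγ t (hIco ht)).1)
    (fun t ht => (hp t ht).2.1.continuousAt.continuousWithinAt)
    (fun t ht => (hp t (hIco ht)).2.1.hasDerivWithinAt)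
    (fun t ht => by rw [dist_eq_norm]; exact (hp t (hIco ht)).2.2)
    (fun t ht => (hp t (hIco ht)).1) (by rw [hp₀, dist_self]) 1 (by norm_num)
  rw [dist_eq_norm, sub_zero] at hgronwall
  exact hgronwall.trans (gronwallBound_three_fifths_le hη)

variable [CompleteSpace E]

theorem exists_integralCurve_mem_closedBall {v : ℝ → E → E}
    {tmin tmax : ℝ} {t₀ : Set.Icc tmin tmax} {x₀ : E} {a r L K : ℝ≥0}
    (hv : IsPicardLindelof v t₀ x₀ a r L K) (hx : x ∈ Metric.closedBall x₀ r) :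
    ∃ γ : ℝ → E, γ t₀ = x ∧ ∀ t ∈ Set.Icc tmin tmax, γ t ∈ Metric.closedBall x₀ a ∧
      HasDerivWithinAt γ (v t (γ t)) (Set.Icc tmin tmax) t := by
  obtain ⟨α, hα⟩ := ODE.FunSpace.exists_isFixedPt_next hv hx
  have hmem (t : ℝ) : α.compProj t ∈ Metric.closedBall x₀ a :=
    α.compProj_mem_closedBall hv.mul_max_le
  refine ⟨α.compProj, by rw [ODE.FunSpace.compProj_val, ← hα, ODE.FunSpace.next_apply₀],
    fun t ht => ⟨hmem t, ?_⟩⟩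
  refine (ODE.hasDerivWithinAt_picard_Icc t₀.2 hv.continuousOn_uncurry
    α.continuous_compProj.continuousOn (fun t _ => hmem t) x ht).congr_of_mem (fun t ht => ?_) ht
  nth_rw 1 [← hα]
  rw [ODE.FunSpace.compProj_of_mem ht, ODE.FunSpace.next_apply]

theorem exists_flowsTo_closedBall {B r K : ℝ≥0} (hBr : B < r)
    (hV : ∀ y ∈ Metric.closedBall x r, ‖V y‖ ≤ B)
    (hK : LipschitzOnWith K V (Metric.closedBall x r)) :
    ∃ y, FlowsTo V (Metric.closedBall x r) x y := by
  have hBr' : (B : ℝ) < r := hBr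
  obtain ⟨τ, hτ, hτr⟩ : ∃ τ : ℝ, 0 < τ ∧ B * (1 + τ) ≤ r := by
    refine ⟨(r - B) / (B + 1), div_pos (sub_pos.2 hBr') (by positivity), ?_⟩
    have hle : B * ((r - B) / (B + 1)) ≤ (r - B : ℝ) := by
      rw [mul_div_left_comm]
      exact mul_le_of_le_one_right (sub_nonneg.2 hBr'.le)
        ((div_le_one (by positivity)).2 (by linarith))
    linarith
  let t₀ : Set.Icc (-τ) (1 + τ) := ⟨0, by linarith, by linarith⟩
  have hpl : IsPicardLindelof (fun _ => V) t₀ x r 0 B K := by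
    refine .of_time_independent hV hK ?_
    rwa [sub_zero, zero_sub, neg_neg, max_eq_left (by linarith), NNReal.coe_zero, sub_zero]
  obtain ⟨γ, hγ₀, hγ⟩ :=
    exists_integralCurve_mem_closedBall hpl (Metric.mem_closedBall_self le_rfl)
  refine ⟨γ 1, γ, hγ₀, rfl, fun t ht => ?_⟩
  have htτ := hγ t ⟨by linarith [ht.1], by linarith [ht.2]⟩
  exact ⟨htτ.1, htτ.2.hasDerivAt (Icc_mem_nhds (by linarith [ht.1]) (by linarith [ht.2]))⟩

end UnitTimeFlows

section OptimalParameter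

theorem sum_pow_two_thirds_div_le_two (m : ℕ) :
    ∑ k ∈ Finset.range m, (2 / 3 : ℝ) ^ k / (k + 1) ≤ 2 := by
  suffices hsharp : ∀ n : ℕ, ∑ k ∈ Finset.range n, (2 / 3 : ℝ) ^ k / (k + 1) ≤
      2 - 3 / 2 * (2 / 3) ^ n from
    (hsharp m).trans (sub_le_self _ (by positivity))
  intro n
  induction n with
  | zero => norm_num
  | succ n ih =>
    rcases n.eq_zero_or_pos with rfl | hn
    · norm_num
    have hn' : (1 : ℝ) ≤ n := by exact_mod_cast hn
    have hdiv : (2 / 3 : ℝ) ^ n / (n + 1) ≤ (2 / 3) ^ n / 2 := by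
      gcongr
      linarith
    rw [Finset.sum_range_succ, pow_succ]
    linarith

theorem harmonic_mul_pow_two_thirds_le {m : ℕ} (hm : 1 ≤ m) :
    harmonic m * (2 / 3) ^ m ≤ (2 / 3 : ℝ) := by
  suffices hstep : 1 ≤ (harmonic m : ℝ) ∧ harmonic m * (2 / 3) ^ m ≤ (2 / 3 : ℝ) from hstep.2
  induction m, hm using Nat.le_induction with
  | base => norm_num [harmonic]
  | succ m hm ih =>
    obtain ⟨hone, hle⟩ := ih
    have hinv : ((m + 1 : ℕ) : ℝ)⁻¹ ≤ 2⁻¹ := by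
      gcongr
      exact_mod_cast Nat.succ_le_succ hm
    have hpos : (0 : ℝ) < ((m + 1 : ℕ) : ℝ)⁻¹ := by positivity
    rw [harmonic_succ, Rat.cast_add, Rat.cast_inv, Rat.cast_natCast]
    refine ⟨by linarith, hle.trans' ?_⟩
    rw [pow_succ', ← mul_assoc]
    gcongr
    linarith

theorem natCast_mul_pow_five_sixths_le (m : ℕ) : (m : ℝ) * (5 / 6) ^ m ≤ 5 := by
  have hbernoulli := one_add_mul_le_pow (a := (1 / 5 : ℝ)) (by norm_num) m
  have hinv : (1 + 1 / 5 : ℝ) ^ m * (5 / 6) ^ m = 1 := by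
    rw [← mul_pow]
    norm_num
  have hpos : (0 : ℝ) < (5 / 6) ^ m := by positivity
  nlinarith [mul_le_mul_of_nonneg_right hbernoulli hpos.le]

theorem lipschitzOnWith_closedBall_of_forall_mem_ball {E G : Type*} [NormedAddCommGroup E]
    [NormedSpace ℂ E] [NormedAddCommGroup G] [NormedSpace ℂ G] {f : E → G} {c : E} {a r M : ℝ}
    (hr : 0 < r) (hd : ∀ y ∈ Metric.ball c (a + r), DifferentiableAt ℂ f y)
    (hM : ∀ y ∈ Metric.ball c (a + r), ‖f y‖ ≤ M) :
    LipschitzOnWith (M / r).toNNReal f (Metric.closedBall c a) :=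
  LipschitzOnWith.of_dist_le' fun y hy z hz => by
    rw [dist_eq_norm, dist_eq_norm]
    exact norm_sub_le_of_forall_mem_ball hr (fun w hw => (hd w hw).differentiableWithinAt) hM hz hy

theorem norm_sum_smul_le_two_mul {E : Type*} [NormedAddCommGroup E] [NormedSpace ℂ E] {m : ℕ}
    {c : ℕ → ℂ} {v : ℕ → E} {K : ℝ} (hK : 0 ≤ K) (hc : ∀ k < m, ‖c k‖ ≤ 1 / (k + 1))
    (hv : ∀ k < m, ‖v k‖ ≤ K * (2 / 3) ^ k) :
    ‖∑ k ∈ Finset.range m, c k • v k‖ ≤ 2 * K := by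
  calc ‖∑ k ∈ Finset.range m, c k • v k‖
      ≤ ∑ k ∈ Finset.range m, (2 / 3) ^ k / (k + 1) * K := by
        refine norm_sum_le_of_le _ fun k hk => ?_
        rw [Finset.mem_range] at hk
        rw [norm_smul, div_mul_eq_mul_div, mul_comm _ K, ← one_mul (K * _), mul_div_right_comm]
        exact mul_le_mul (hc k hk) (hv k hk) (norm_nonneg _) (by positivity)
    _ ≤ 2 * K := by
        rw [← Finset.sum_mul]
        gcongr
        exact sum_pow_two_thirds_div_le_two m

namespace NearIdentityFamily

variable {E : Type*} [NormedAddCommGroup E] [NormedSpace ℂ E] {ρ : E → ℝ} {δ ε κ : ℝ}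
  {F : ℂ → E → E} {x : E} {m : ℕ}

theorem lt_of_one_lt (h : NearIdentityFamily ρ δ ε F) (hκ : 1 < κ)
    (hδ : 6 * (m + 1) * κ * ε ≤ δ) : 6 * (m + 1) * ε < δ := by
  have hε := h.pos
  refine lt_of_lt_of_le ?_ hδ
  exact mul_lt_mul_of_pos_right (lt_mul_of_one_lt_right (by positivity) hκ) hε

theorem gauge_le_of_mem_closedBall (h : NearIdentityFamily ρ δ ε F) {r : ℝ} {y : E}
    (hx : ρ x ≤ 0) (hy : y ∈ Metric.closedBall x r) : ρ y ≤ r := by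
  linarith [h.gauge_le y x, mem_closedBall_iff_norm.1 hy]

theorem differentiableAt_newtonField (h : NearIdentityFamily ρ δ ε F) (hκ : 1 < κ)
    (hδ : 6 * (m + 1) * κ * ε ≤ δ) (hx : ρ x ≤ δ / 2) :
    DifferentiableAt ℂ (newtonField (F 1) m) x := by
  have hε := h.pos
  have hroom := h.lt_of_one_lt hκ hδ
  have hdiff : ∀ n ∈ Finset.range (m + 1), DifferentiableAt ℂ (F 1)^[n] x := fun n hn => by
    have hn : (n : ℝ) ≤ m := by exact_mod_cast Finset.mem_range_succ_iff.1 hn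
    refine h.differentiableAt_iterate n ?_
    rw [norm_one]
    nlinarith
  have heq : newtonField (F 1) m =
      fun y => ∑ n ∈ Finset.range (m + 1), newtonWeight ℂ m n • (F 1)^[n] y :=
    funext fun y => newtonDeriv_eq_sum m _
  rw [heq]
  exact DifferentiableAt.fun_sum fun n hn => (hdiff n hn).fun_const_smul _

theorem lipschitzOnWith_closedBall_of_gauge_le (h : NearIdentityFamily ρ δ ε F) {a b M : ℝ}
    {V : E → E} (hab : a < b) (hVd : ∀ y, ρ y ≤ b → DifferentiableAt ℂ V y)
    (hV : ∀ y, ρ y ≤ b → ‖V y‖ ≤ M) (hx : ρ x ≤ 0) :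
    LipschitzOnWith (M / (b - a)).toNNReal V (Metric.closedBall x a) := by
  have hball : ∀ y ∈ Metric.ball x (a + (b - a)), ρ y ≤ b := fun y hy =>
    h.gauge_le_of_mem_closedBall hx (Metric.ball_subset_closedBall (add_sub_cancel a b ▸ hy))
  exact lipschitzOnWith_closedBall_of_forall_mem_ball (sub_pos.2 hab)
    (fun y hy => hVd y (hball y hy)) fun y hy => hV y (hball y hy)

variable [CompleteSpace E]

theorem norm_finDiff_succ_one_le (h : NearIdentityFamily ρ δ ε F) (hκ : 1 < κ)
    (hδ : 6 * (m + 1) * κ * ε ≤ δ) (hx : ρ x ≤ δ / 2) :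
    ∀ k < m, ‖finDiff (F 1) (k + 1) x‖ ≤ ε * (2 / 3) ^ k := by
  intro k hk
  have hε := h.pos
  refine (h.norm_finDiff_succ_le_of_gauge_le (r := 3 / 2 * κ) (by linarith) hk hx
    (by rw [norm_one]; linarith)).trans ?_
  rw [norm_one, one_mul]
  gcongr ε * ?_ ^ k
  rw [div_le_div_iff₀ (by positivity) (by norm_num)]
  linarith

theorem norm_newtonField_one_le_natCast_mul (h : NearIdentityFamily ρ δ ε F) (hκ : 1 < κ)
    (hδ : 6 * (m + 1) * κ * ε ≤ δ) (hx : ρ x ≤ δ / 2) : ‖newtonField (F 1) m x‖ ≤ m * ε := by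
  have hε := h.pos
  refine (norm_newtonField_le fun k hk => (h.norm_finDiff_succ_one_le hκ hδ hx k hk).trans
    (mul_le_of_le_one_right hε.le (pow_le_one₀ (by norm_num) (by norm_num)))).trans ?_
  gcongr
  exact harmonic_le_natCast m

theorem norm_newtonField_one_le_two_mul (h : NearIdentityFamily ρ δ ε F) (hκ : 1 < κ)
    (hδ : 6 * (m + 1) * κ * ε ≤ δ) (hx : ρ x ≤ δ / 2) : ‖newtonField (F 1) m x‖ ≤ 2 * ε := by
  rw [newtonField_eq_sum]
  exact norm_sum_smul_le_two_mul h.pos.le (fun k _ => (norm_neg_one_pow_div_succ k).le)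
    (h.norm_finDiff_succ_one_le hκ hδ hx)

theorem norm_newtonCurve_one_sub_le (h : NearIdentityFamily ρ δ ε F) (hκ : 1 < κ)
    (hδ : 6 * (m + 1) * κ * ε ≤ δ) (hx : ρ x ≤ δ / 2) {t : ℝ} (ht₀ : 0 ≤ t) (ht₁ : t ≤ 1) :
    ‖newtonCurve (F 1) m x t - x‖ ≤ 2 * ε := by
  rw [newtonCurve_eq_add_sum, add_sub_cancel_left]
  exact norm_sum_smul_le_two_mul h.pos.le (fun k _ => norm_eval_binomialPoly_succ_le k ht₀ ht₁)
    (h.norm_finDiff_succ_one_le hκ hδ hx)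

theorem norm_newtonVelocity_one_sub_newtonField_le (h : NearIdentityFamily ρ δ ε F) (hm : 1 ≤ m)
    (hκ : 1 < κ) (hδ : 6 * (m + 1) * κ * ε ≤ δ) (hx : ρ x ≤ 0) {t : ℝ} (ht₀ : 0 ≤ t)
    (ht₁ : t ≤ 1) :
    ‖newtonVelocity (F 1) m x t - newtonField (F 1) m (newtonCurve (F 1) m x t)‖ ≤
      4 / 3 * (ε * (1 / κ) ^ m) := by
  have hε := h.pos
  have : 0 < κ := one_pos.trans hκ
  have hdefect := h.norm_newtonVelocity_sub_newtonField_le (m := m) (r := 3 / 2 * κ)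
    (by linarith) hx (by rw [norm_one]; linarith) ht₀ ht₁
  have hratio : ‖(1 : ℂ)‖ / (3 / 2 * κ) = 2 / 3 * (1 / κ) := by
    rw [norm_one]
    field_simp
  calc _ ≤ 2 * harmonic m * (3 / 2 * κ * ε) * (2 / 3 * (1 / κ)) ^ (m + 1) := by rwa [← hratio]
    _ = 2 * (harmonic m * (2 / 3) ^ m) * (ε * (1 / κ) ^ m) := by
        rw [pow_succ, mul_pow]
        field_simp
    _ ≤ 2 * (2 / 3) * (ε * (1 / κ) ^ m) := by
        gcongr
        exact harmonic_mul_pow_two_thirds_le hm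
    _ = 4 / 3 * (ε * (1 / κ) ^ m) := by ring

-- The radius `21 / 5 * ε` leaves a margin over the length `4 * ε` of the integral curves to be
-- compared; the Lipschitz constant `3 / 5` makes the Grönwall factor at most `3 / 2`.
theorem lipschitzOnWith_newtonField (h : NearIdentityFamily ρ δ ε F) (hm : 1 ≤ m) (hκ : 1 < κ)
    (hδ : 6 * (m + 1) * κ * ε ≤ δ) (hx : ρ x ≤ 0) :
    LipschitzOnWith (3 / 5) (newtonField (F 1) m) (Metric.closedBall x (21 / 5 * ε)) := by
  have hε := h.pos
  have hroom := h.lt_of_one_lt hκ hδ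
  have hm' : (1 : ℝ) ≤ m := by exact_mod_cast hm
  have hr : 0 < δ / 2 - 21 / 5 * ε := by nlinarith
  refine (h.lipschitzOnWith_closedBall_of_gauge_le (sub_pos.1 hr)
    (fun y => h.differentiableAt_newtonField hκ hδ)
    (fun y => h.norm_newtonField_one_le_natCast_mul hκ hδ) hx).weaken ?_
  rw [Real.toNNReal_le_iff_le_coe, div_le_iff₀ hr]
  push_cast
  nlinarith

theorem exists_flowsTo_closedBall_of_norm_le (h : NearIdentityFamily ρ δ ε F)
    (hδ : 12 * ε ≤ δ) {V : E → E} (hVd : ∀ y, ρ y ≤ δ / 2 → DifferentiableAt ℂ V y)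
    (hV : ∀ y, ρ y ≤ δ / 2 → ‖V y‖ ≤ 4 * ε) (hx : ρ x ≤ 0) :
    ∃ y, FlowsTo V (Metric.closedBall x (21 / 5 * ε)) x y := by
  have hε := h.pos
  have hB : (((4 * ε).toNNReal : NNReal) : ℝ) = 4 * ε := Real.coe_toNNReal _ (by positivity)
  have hR : (((21 / 5 * ε).toNNReal : NNReal) : ℝ) = 21 / 5 * ε :=
    Real.coe_toNNReal _ (by positivity)
  have hlip := h.lipschitzOnWith_closedBall_of_gauge_le (a := 21 / 5 * ε) (by linarith) hVd hV hx
  rw [← hR] at hlip ⊢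
  refine exists_flowsTo_closedBall (B := (4 * ε).toNNReal)
    (by rw [← NNReal.coe_lt_coe, hB, hR]; linarith) (fun y hy => ?_) hlip
  rw [hB]
  rw [hR] at hy
  exact hV y ((h.gauge_le_of_mem_closedBall hx hy).trans (by linarith))

theorem exists_flowsTo_norm_sub_le (h : NearIdentityFamily ρ δ ε F) (hm : 1 ≤ m) (hκ : 1 < κ)
    (hδ : 6 * (m + 1) * κ * ε ≤ δ) {V : E → E} {η : ℝ}
    (hVd : ∀ y, ρ y ≤ δ / 2 → DifferentiableAt ℂ V y) (hV : ∀ y, ρ y ≤ δ / 2 → ‖V y‖ ≤ 4 * ε)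
    (hη : ∀ y, ρ y ≤ δ / 2 → ‖V y - newtonField (F 1) m y‖ ≤ η) (hx : ρ x ≤ 0) :
    ∃ y, FlowsTo V {y | ρ y ≤ δ / 2} x y ∧
      ‖y - F 1 x‖ ≤ 3 / 2 * (η + 4 / 3 * (ε * (1 / κ) ^ m)) := by
  have hε := h.pos
  have hm' : (1 : ℝ) ≤ m := by exact_mod_cast hm
  have hroom : 12 * ε ≤ δ := by nlinarith [h.lt_of_one_lt hκ hδ]
  have hsub : Metric.closedBall x (21 / 5 * ε) ⊆ {y | ρ y ≤ δ / 2} := fun y hy =>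
    (h.gauge_le_of_mem_closedBall hx hy).trans (by linarith)
  obtain ⟨y, hy⟩ := h.exists_flowsTo_closedBall_of_norm_le hroom hVd hV hx
  refine ⟨y, hy.mono hsub fun _ _ => rfl, ?_⟩
  have hstart := newtonCurve_natCast (F 1) m x m.zero_le
  have hend := newtonCurve_natCast (F 1) m x hm
  rw [Nat.cast_zero] at hstart
  rw [Nat.cast_one, Function.iterate_one] at hend
  rw [← hend, ← Complex.ofReal_one]
  refine hy.norm_sub_le_of_approx (p := fun t => newtonCurve (F 1) m x t)
    (p' := fun t => newtonVelocity (F 1) m x t) (h.lipschitzOnWith_newtonField hm hκ hδ hx)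
    (fun z hz => hη z (hsub hz)) (by rwa [Complex.ofReal_zero]) fun t ht => ⟨?_, ?_, ?_⟩
  · exact mem_closedBall_iff_norm.2
      ((h.norm_newtonCurve_one_sub_le hκ hδ (by linarith) ht.1 ht.2).trans (by linarith))
  · simpa [Function.comp_def] using
      (hasDerivAt_newtonCurve (F 1) m x t).scomp t Complex.ofRealCLM.hasDerivAt
  · exact h.norm_newtonVelocity_one_sub_newtonField_le hm hκ hδ hx ht.1 ht.2

end NearIdentityFamily

end OptimalParameter

section InterpolatingHamiltonian

theorem natCast_mul_natCast_mul_pow_five_sixths_le (m : ℕ) {d : ℕ} (hd : 1 ≤ d) :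
    m * d * (5 / 6 : ℝ) ^ m ≤ m + 5 * d - 4 := by
  have hd' : (1 : ℝ) ≤ d := by exact_mod_cast hd
  have hpow : (5 / 6 : ℝ) ^ m ≤ 1 := pow_le_one₀ (by norm_num) (by norm_num)
  calc m * d * (5 / 6 : ℝ) ^ m = m * (5 / 6) ^ m + (d - 1) * (m * (5 / 6) ^ m) := by ring
    _ ≤ m * 1 + (d - 1) * 5 := by
        gcongr
        exact natCast_mul_pow_five_sixths_le m
    _ ≤ m + 5 * d - 4 := by linarith

theorem symplectic_remainder_le (m : ℕ) {d : ℕ} (hd : 1 ≤ d) {κ ε : ℝ} (hκ : 0 < κ) (hε : 0 < ε) :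
    m * 2 ^ m / 2 * (d * ((12 / 5 * κ * ε) ^ 2 / (3 / 5 * (κ * ε) * (m + 5 * d - 4)))) *
      (1 / (12 / 5 * κ)) ^ (m + 1) ≤ 2 * (ε * (1 / κ) ^ m) := by
  have hd' : (1 : ℝ) ≤ d := by exact_mod_cast hd
  have hA : (0 : ℝ) < m + 5 * d - 4 := by linarith [(m.cast_nonneg : (0 : ℝ) ≤ m)]
  have hratio : 1 / (12 / 5 * κ) = 5 / 12 * (1 / κ) := by field_simp
  have hpow : (5 / 6 : ℝ) ^ m = 2 ^ m * (5 / 12) ^ m := by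
    rw [← mul_pow]
    norm_num
  calc _ = 2 * (ε * (1 / κ) ^ m) * (m * d * (5 / 6) ^ m / (m + 5 * d - 4)) := by
        rw [hratio, hpow, pow_succ _ m, mul_pow (5 / 12)]
        generalize (m + 5 * d - 4 : ℝ) = A at hA
        generalize (1 / κ) ^ m = u
        field_simp
        ring
    _ ≤ 2 * (ε * (1 / κ) ^ m) :=
        mul_le_of_le_one_right (by positivity)
          ((div_le_one hA).2 (natCast_mul_natCast_mul_pow_five_sixths_le m hd))

namespace NearIdentityFamily

theorem gauge_iterate_one_lt {E : Type*} [NormedAddCommGroup E] [NormedSpace ℂ E] {ρ : E → ℝ}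
    {δ ε κ : ℝ} {F : ℂ → E → E} {x : E} {m j : ℕ} (h : NearIdentityFamily ρ δ ε F) (hκ : 1 < κ)
    (hδ : 6 * (m + 1) * κ * ε ≤ δ) (hx : ρ x ≤ δ / 2) (hj : j < m) :
    ρ ((F 1)^[j] x) + 2 * ε < 3 * δ / 4 := by
  have hε := h.pos
  have hroom := h.lt_of_one_lt hκ hδ
  have hj' : (j : ℝ) + 1 ≤ m := by exact_mod_cast hj
  have hjm := mul_le_mul_of_nonneg_right hj' hε.le
  have hiter := h.gauge_iterate_le (μ := 1) (x := x) j (by rw [norm_one]; nlinarith)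
  rw [norm_one, mul_one] at hiter
  nlinarith

variable {d m : ℕ} {ρ : CPhase d → ℝ} {δ ε κ : ℝ} {F : ℂ → CPhase d → CPhase d}
  {S : CPhase d → ℂ} {x : CPhase d}

theorem interpVF_eq_newtonField_one (h : NearIdentityFamily ρ δ ε F) (hκ : 1 < κ)
    (hδ : 6 * (m + 1) * κ * ε ≤ δ) {f : CPhase d → CPhase d}
    (hf : ∀ y, ρ y < 3 * δ / 4 → f y = F 1 y) (hx : ρ x ≤ δ / 2) :
    interpVF d f m x = newtonField (F 1) m x := by
  rw [interpVF_eq_newtonField]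
  refine newtonDeriv_congr fun n => ?_
  induction n with
  | zero => exact fun _ => rfl
  | succ n ih =>
    intro hn
    rw [Function.iterate_succ_apply', Function.iterate_succ_apply', ih (by omega)]
    exact hf _ (by linarith [h.pos, h.gauge_iterate_one_lt hκ hδ hx hn])

theorem generatedAt_iterate_one (h : NearIdentityFamily ρ δ ε F)
    (hS : ∀ y, ρ y + 2 * ε < δ → GeneratedAt S (F 1) y) (hκ : 1 < κ)
    (hδ : 6 * (m + 1) * κ * ε ≤ δ) (hx : ρ x ≤ δ / 2) :
    ∀ j < m, GeneratedAt S (F 1) ((F 1)^[j] x) := fun j hj =>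
  have hε := h.pos
  hS _ (by nlinarith [h.gauge_iterate_one_lt hκ hδ hx hj, h.lt_of_one_lt hκ hδ])

theorem mul_add_one_le (h : NearIdentityFamily ρ δ ε F) (hd : 1 ≤ d) (hκ : 1 < κ)
    (hδ : 6 * (m + d) * κ * ε ≤ δ) : 6 * (m + 1) * κ * ε ≤ δ := by
  have hε := h.pos
  refine hδ.trans' ?_
  gcongr
  exact_mod_cast hd

theorem norm_hamVF_sub_newtonField_one_le (h : NearIdentityFamily ρ δ ε F)
    (hS : ∀ y, ρ y + 2 * ε < δ → GeneratedAt S (F 1) y) (hd : 1 ≤ d) (hκ : 1 < κ)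
    (hδ : 6 * (m + d) * κ * ε ≤ δ) (hx : ρ x ≤ δ / 2) :
    ‖hamVF d (newtonHamiltonian S (F 1) m) x - newtonField (F 1) m x‖ ≤
      2 * (ε * (1 / κ) ^ m) := by
  have hε := h.pos
  have hd' : (1 : ℝ) ≤ d := by exact_mod_cast hd
  have hκ₀ : 0 < κ := one_pos.trans hκ
  refine (h.norm_hamVF_newtonHamiltonian_sub_le
    (h.generatedAt_iterate_one hS hκ (h.mul_add_one_le hd hκ hδ) hx) (R := 12 / 5 * κ)
    (r := 3 / 5 * (κ * ε) * (m + 5 * d - 4)) (by linarith)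
    (mul_pos (by positivity) (by linarith [(m.cast_nonneg : (0 : ℝ) ≤ m)])) ?_).trans
      (symplectic_remainder_le m hd hκ₀ hε)
  linarith

theorem norm_hamVF_newtonHamiltonian_le (h : NearIdentityFamily ρ δ ε F)
    (hS : ∀ y, ρ y + 2 * ε < δ → GeneratedAt S (F 1) y) (hd : 1 ≤ d) (hκ : 1 < κ)
    (hδ : 6 * (m + d) * κ * ε ≤ δ) (hx : ρ x ≤ δ / 2) :
    ‖hamVF d (newtonHamiltonian S (F 1) m) x‖ ≤ 4 * ε := by
  have hpow : ε * (1 / κ) ^ m ≤ ε := mul_le_of_le_one_right h.pos.le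
    (pow_le_one₀ (by positivity) ((div_le_one (by linarith)).2 hκ.le))
  linarith [norm_le_norm_sub_add (hamVF d (newtonHamiltonian S (F 1) m) x) (newtonField (F 1) m x),
    h.norm_hamVF_sub_newtonField_one_le hS hd hκ hδ hx,
    h.norm_newtonField_one_le_two_mul hκ (h.mul_add_one_le hd hκ hδ) hx]

theorem exists_flowsTo_newtonField (h : NearIdentityFamily ρ δ ε F) (hm : 1 ≤ m) (hκ : 1 < κ)
    (hδ : 6 * (m + 1) * κ * ε ≤ δ) (hx : ρ x ≤ 0) :
    ∃ y, FlowsTo (newtonField (F 1) m) {y | ρ y ≤ δ / 2} x y ∧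
      ‖y - F 1 x‖ ≤ 2 * (ε * (1 / κ) ^ m) := by
  obtain ⟨y, hy, hyx⟩ := h.exists_flowsTo_norm_sub_le hm hκ hδ (η := 0)
    (fun y => h.differentiableAt_newtonField hκ hδ)
    (fun y hy => (h.norm_newtonField_one_le_two_mul hκ hδ hy).trans (by linarith [h.pos]))
    (fun y _ => by rw [sub_self, norm_zero]) hx
  exact ⟨y, hy, hyx.trans_eq (by ring)⟩

theorem exists_flowsTo_hamVF (h : NearIdentityFamily ρ δ ε F)
    (hS : ∀ y, ρ y + 2 * ε < δ → GeneratedAt S (F 1) y) (hd : 1 ≤ d) (hm : 1 ≤ m) (hκ : 1 < κ)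
    (hδ : 6 * (m + d) * κ * ε ≤ δ) (hx : ρ x ≤ 0) :
    ∃ y, FlowsTo (hamVF d (newtonHamiltonian S (F 1) m)) {y | ρ y ≤ δ / 2} x y ∧
      ‖y - F 1 x‖ ≤ 5 * (ε * (1 / κ) ^ m) := by
  have hδ' := h.mul_add_one_le hd hκ hδ
  obtain ⟨y, hy, hyx⟩ := h.exists_flowsTo_norm_sub_le hm hκ hδ'
    (fun y hy => (analyticAt_hamVF (GeneratedAt.analyticAt_newtonHamiltonian
      (h.generatedAt_iterate_one hS hκ hδ' hy))).differentiableAt)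
    (fun y => h.norm_hamVF_newtonHamiltonian_le hS hd hκ hδ)
    (fun y => h.norm_hamVF_sub_newtonField_one_le hS hd hκ hδ) hx
  exact ⟨y, hy, hyx.trans_eq (by ring)⟩

end NearIdentityFamily

theorem exists_nearIdentityFamily_generatedAt {d : ℕ} {ρ : CPhase d → ℝ} {δ ε : ℝ}
    {S : CPhase d → ℂ} (hρ : LipschitzWith 1 ρ) (hε : 0 < ε)
    (hS : ∀ x, ρ x ≤ δ → AnalyticAt ℂ S x)
    (hSε : ∀ x, ρ x ≤ δ → max ‖pGrad d S x‖ ‖qGrad d S x‖ ≤ ε) :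
    ∃ F, NearIdentityFamily ρ δ ε F ∧ ∀ x, ρ x + 2 * ε < δ → GeneratedAt S (F 1) x ∧
      ∀ y, SemiImplicitStep (pGrad d S) (qGrad d S) 1 x y → ρ (y.1, x.2) ≤ δ → y = F 1 x := by
  have hSq := fun x hx => (le_max_right _ _).trans (hSε x hx)
  obtain ⟨F, h, hF⟩ := exists_nearIdentityFamily_semiImplicitStep hρ hε
    (fun x hx => analyticAt_pGrad (hS x hx)) (fun x hx => analyticAt_qGrad (hS x hx))
    (fun x hx => (le_max_left _ _).trans (hSε x hx)) hSq
  refine ⟨F, h, fun x hx => ?_⟩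
  have hx₁ : ρ x + 2 * ‖(1 : ℂ)‖ * ε < δ := by rwa [norm_one, mul_one]
  obtain ⟨hstep, hδ⟩ := hF 1 x hx₁
  exact ⟨⟨AnalyticAt.fun_comp (f := fun y => ((1 : ℂ), y)) (h.analyticAt 1 x hx₁)
    (analyticAt_const.prod analyticAt_id), hS _ hδ.le, hstep⟩,
    fun y => hstep.eq hρ hε.le (fun x hx => analyticAt_qGrad (hS x hx)) hSq hx₁ hδ.le⟩

theorem exists_hamiltonian_of_gauge {d m : ℕ} {ρ : CPhase d → ℝ} {δ ε κ : ℝ} {S : CPhase d → ℂ}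
    {f : CPhase d → CPhase d} (hρ : LipschitzWith 1 ρ) (hε : 0 < ε)
    (hS : ∀ x, ρ x ≤ δ → AnalyticAt ℂ S x)
    (hSε : ∀ x, ρ x ≤ δ → max ‖pGrad d S x‖ ‖qGrad d S x‖ ≤ ε)
    (hf : ∀ x, ρ x < 3 * δ / 4 →
      ρ ((f x).1, x.2) ≤ δ ∧ SemiImplicitStep (pGrad d S) (qGrad d S) 1 x (f x))
    (hd : 1 ≤ d) (hm : 1 ≤ m) (hκ : 1 < κ) (hδ : 6 * (m + d) * κ * ε ≤ δ) :
    (∀ x, ρ x ≤ δ / 2 → ‖interpVF d f m x‖ ≤ 2 * ε) ∧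
    ∃ H : CPhase d → ℂ, (∀ x, ρ x ≤ δ / 2 → AnalyticAt ℂ H x) ∧
      (∀ x, ρ x ≤ δ / 2 → ‖hamVF d H x‖ ≤ 4 * ε) ∧
      (∀ x, ρ x ≤ 0 → ∃ y, FlowsTo (interpVF d f m) {y | ρ y ≤ δ / 2} x y ∧
        ‖y - f x‖ ≤ 2 * (ε * (1 / κ) ^ m)) ∧
      (∀ x, ρ x ≤ 0 → ∃ y, FlowsTo (hamVF d H) {y | ρ y ≤ δ / 2} x y ∧
        ‖y - f x‖ ≤ 5 * (ε * (1 / κ) ^ m)) ∧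
      ∀ x, ρ x ≤ δ / 2 → ‖hamVF d H x - interpVF d f m x‖ ≤ 2 * (ε * (1 / κ) ^ m) := by
  obtain ⟨F, h, hF⟩ := exists_nearIdentityFamily_generatedAt hρ hε hS hSε
  have hG := fun x hx => (hF x hx).1
  have hδ' := h.mul_add_one_le hd hκ hδ
  have hm' : (1 : ℝ) ≤ m := by exact_mod_cast hm
  have hεδ : 12 * ε < δ := by nlinarith [h.lt_of_one_lt hκ hδ']
  have hfF : ∀ x, ρ x < 3 * δ / 4 → f x = F 1 x := fun x hx =>
    (hF x (by linarith)).2 _ (hf x hx).2 (hf x hx).1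
  have hfF₀ : ∀ x, ρ x ≤ 0 → f x = F 1 x := fun x hx => hfF x (by linarith)
  have hX : ∀ x, ρ x ≤ δ / 2 → interpVF d f m x = newtonField (F 1) m x := fun x =>
    h.interpVF_eq_newtonField_one hκ hδ' hfF
  refine ⟨fun x hx => hX x hx ▸ h.norm_newtonField_one_le_two_mul hκ hδ' hx,
    newtonHamiltonian S (F 1) m,
    fun x hx => GeneratedAt.analyticAt_newtonHamiltonian (h.generatedAt_iterate_one hG hκ hδ' hx),
    fun x => h.norm_hamVF_newtonHamiltonian_le hG hd hκ hδ, fun x hx => ?_,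
    fun x hx => hfF₀ x hx ▸ h.exists_flowsTo_hamVF hG hd hm hκ hδ hx,
    fun x hx => hX x hx ▸ h.norm_hamVF_sub_newtonField_one_le hG hd hκ hδ hx⟩
  obtain ⟨y, hy, hyx⟩ := h.exists_flowsTo_newtonField hm hκ hδ' hx
  exact ⟨y, hy.mono subset_rfl fun z hz => (hX z hz).symm, hfF₀ x hx ▸ hyx⟩

end InterpolatingHamiltonian

theorem cthickening_eq_setOf_infDist_le {α : Type*} [PseudoMetricSpace α] {s : Set α}
    (hs : s.Nonempty) {r : ℝ} (hr : 0 ≤ r) :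
    Metric.cthickening r s = {x | Metric.infDist x s ≤ r} :=
  Set.ext fun _ => Metric.mem_cthickening_iff.trans
    (ENNReal.le_ofReal_iff_toReal_le (Metric.infEDist_ne_top hs) hr)

theorem pow_mul_pow_succ_eq {a ε : ℝ} (ha : a ≠ 0) (hε : ε ≠ 0) (δ : ℝ) (m : ℕ) :
    (a / δ) ^ m * ε ^ (m + 1) = ε * (1 / (δ / (a * ε))) ^ m := by
  have hratio : 1 / (δ / (a * ε)) = a / δ * ε := by field_simp
  rw [hratio, mul_pow, pow_succ]
  ring

/-- **Polynomial-order embedding bounds.**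
In the setting of the embedding theorem (`|∇S| ≤ ε` on `D`, `f` generated by
`P·q + S(P,q)`), for every integer `m` with `1 ≤ m < δ/(6ε) − d`, setting
`C_m = 6(m+d)/δ`: `‖X_m‖_{D₁} ≤ 2ε`; there is a Hamiltonian vector field
`X̂_m = J∇H_m` on `D₁` with `‖X̂_m‖_{D₁} ≤ 4ε`; and
`‖Φ_{X_m} − f‖_{D₀} ≤ 3 C_m^m ε^{m+1}`, `‖Φ_{X̂_m} − f‖_{D₀} ≤ 5 C_m^m ε^{m+1}`,
`‖X̂_m − X_m‖_{D₁} ≤ 4 C_m^m ε^{m+1}`. -/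
theorem polynomial_order_embedding_bounds (d : ℕ) (hd : 1 ≤ d)
    (D₀ : Set (CPhase d)) (δ ε : ℝ) (hδ : 0 < δ) (hε : 0 < ε)
    (D D₁ : Set (CPhase d))
    (hD : D = Metric.cthickening δ D₀)
    (hD₁ : D₁ = Metric.cthickening (δ / 2) D₀)
    (S : CPhase d → ℂ) (hS : AnalyticOnNhd ℂ S D)
    (hεub : ∀ x ∈ D, max ‖pGrad d S x‖ ‖qGrad d S x‖ ≤ ε)
    (f : CPhase d → CPhase d)
    (hfa : AnalyticOnNhd ℂ f (Metric.thickening (3 * δ / 4) D₀))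
    (hf : ∀ x ∈ Metric.thickening (3 * δ / 4) D₀,
      ((f x).1, x.2) ∈ D ∧
      x.1 = (f x).1 + qGrad d S ((f x).1, x.2) ∧
      (f x).2 = x.2 + pGrad d S ((f x).1, x.2))
    (m : ℕ) (hm : 1 ≤ m)
    (hmlt : (m : ℝ) < δ / (6 * ε) - d) :
    (∀ x ∈ D₁, ‖interpVF d f m x‖ ≤ 2 * ε) ∧
    ∃ H : CPhase d → ℂ, AnalyticOnNhd ℂ H D₁ ∧
      (∀ x ∈ D₁, ‖hamVF d H x‖ ≤ 4 * ε) ∧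
      (∃ Φ : CPhase d → CPhase d,
        (∀ x ∈ D₀, ∃ γ : ℝ → CPhase d, γ 0 = x ∧ γ 1 = Φ x ∧
          ∀ t ∈ Set.Icc (0 : ℝ) 1, γ t ∈ D₁ ∧ HasDerivAt γ (interpVF d f m (γ t)) t) ∧
        ∀ x ∈ D₀, ‖Φ x - f x‖ ≤
          3 * (6 * ((m : ℝ) + d) / δ) ^ m * ε ^ (m + 1)) ∧
      (∃ Ψ : CPhase d → CPhase d,
        (∀ x ∈ D₀, ∃ γ : ℝ → CPhase d, γ 0 = x ∧ γ 1 = Ψ x ∧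
          ∀ t ∈ Set.Icc (0 : ℝ) 1, γ t ∈ D₁ ∧ HasDerivAt γ (hamVF d H (γ t)) t) ∧
        ∀ x ∈ D₀, ‖Ψ x - f x‖ ≤
          5 * (6 * ((m : ℝ) + d) / δ) ^ m * ε ^ (m + 1)) ∧
      (∀ x ∈ D₁, ‖hamVF d H x - interpVF d f m x‖ ≤
        4 * (6 * ((m : ℝ) + d) / δ) ^ m * ε ^ (m + 1)) := by
  subst hD hD₁
  rcases D₀.eq_empty_or_nonempty with rfl | hne
  · simp only [Metric.cthickening_empty]
    exact ⟨by simp, fun _ => 0, by simp [AnalyticOnNhd], by simp, ⟨id, by simp, by simp⟩,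
      ⟨id, by simp, by simp⟩, by simp⟩
  rw [cthickening_eq_setOf_infDist_le hne hδ.le] at hS hεub hf
  rw [cthickening_eq_setOf_infDist_le hne (half_pos hδ).le]
  have ha : 0 < 6 * ((m : ℝ) + d) := by positivity
  have hκ : 1 < δ / (6 * ((m : ℝ) + d) * ε) := by
    rw [lt_sub_iff_add_lt, lt_div_iff₀ (by positivity)] at hmlt
    exact (one_lt_div (by positivity)).2 (by linarith)
  have hC : 0 ≤ (6 * ((m : ℝ) + d) / δ) ^ m * ε ^ (m + 1) := by positivity
  have hD₀ : ∀ x ∈ D₀, Metric.infDist x D₀ ≤ 0 := fun x hx => (Metric.infDist_zero_of_mem hx).le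
  obtain ⟨hX, H, hH, hHε, hΦ, hΨ, hHX⟩ := exists_hamiltonian_of_gauge
    (Metric.lipschitz_infDist_pt D₀) hε hS hεub (fun x hx =>
      have ⟨hδ, hp, hq⟩ := hf x ((Metric.mem_thickening_iff_infDist_lt hne).2 hx)
      ⟨hδ, by rwa [one_smul], by rwa [one_smul]⟩) hd hm hκ (le_of_eq (by field_simp))
  rw [← pow_mul_pow_succ_eq ha.ne' hε.ne'] at hΦ hΨ hHX
  simp_rw [mul_assoc _ (_ ^ m)]
  exact ⟨hX, H, hH, hHε,
    exists_timeOneMap fun x hx => (hΦ x (hD₀ x hx)).imp fun _ =>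
      And.imp_right fun hΦx => hΦx.trans (by linarith),
    exists_timeOneMap fun x hx => hΨ x (hD₀ x hx), fun x hx => (hHX x hx).trans (by linarith)⟩
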